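/- arXiv:1604.08830 — 3 statements merged into one kernel-verified Lean document; each statement's English description precedes it below -/
import Mathlib

section
/- Let n ≥ 2, −∞ < μ < 1/4, p > 1, and assume Λ₀ := Λ(−2/(p−1)) − Λ(α₊) > 0. Suppose w is a positive function, twice continuously differentiable on (0,1), solving (1−t²)w''(t) + (2α₊(1−t²)/t − (n−1)t)w'(t) + Λ₀ w(t) = t^{α₊(p−1)} w(t)^p for all t ∈ (0,1), and suppose w extends continuously to t = 0 with finite limit w(0). Then w(0) > 0. -/
open Real Set

noncomputable def lap {n : ℕ} (u : EuclideanSpace ℝ (Fin n) → ℝ)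
    (x : EuclideanSpace ℝ (Fin n)) : ℝ :=
  ∑ i : Fin n, iteratedFDeriv ℝ 2 u x ![EuclideanSpace.single i 1, EuclideanSpace.single i 1]

noncomputable def x1 {n : ℕ} (x : EuclideanSpace ℝ (Fin n)) : ℝ :=
  if h : 0 < n then x ⟨0, h⟩ else 0

def halfSpace (n : ℕ) : Set (EuclideanSpace ℝ (Fin n)) := {x | 0 < x1 x}

noncomputable def aPlus (μ : ℝ) : ℝ := 1 / 2 + Real.sqrt (1 / 4 - μ)

noncomputable def aMinus (μ : ℝ) : ℝ := 1 / 2 - Real.sqrt (1 / 4 - μ)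

noncomputable def Lam (n : ℕ) (s : ℝ) : ℝ := s * (s + n - 2)

/-!
Divided by `1 - t ^ 2`, the angular operator `(1 - t²) w'' + (2a(1 - t²) / t - b t) w'` is
`(ρ w')' / ρ` with the weight `ρ = t ^ (2a) (1 - t²) ^ (b / 2)`. Near `0` the nonlinear equation
gives the linear inequality `angularOp a b w ≤ C w`, while `h = exp (C t²)` satisfies the reverse
one. Hence `ρ (w' h - w h') = ρ h² (w / h)'` is nonincreasing near `0`. Since `2a ≥ 1`, the weight
`ρ h²` is `O(t)`, so if `(w / h)'` were positive somewhere, it would be at least `c / t` below that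
point and `w / h` would diverge logarithmically to `-∞` at `0`. Therefore `w / h` is nonincreasing
near `0`, and its limit at `0` is at least one of its positive values.
-/

section

open Filter Topology Asymptotics

section WeightedDerivative

variable {f m w h ρ : ℝ → ℝ} {c d L H : ℝ}

theorem tendsto_nhdsGT_zero_atBot_of_mul_inv_le_deriv (hc : 0 < c)
    (hf : ∀ᶠ t in 𝓝[>] 0, DifferentiableAt ℝ f t)
    (hderiv : ∀ᶠ t in 𝓝[>] 0, c * t⁻¹ ≤ deriv f t) : Tendsto f (𝓝[>] 0) atBot := by
  obtain ⟨d, hd, hd'⟩ := (nhdsGT_basis (0 : ℝ)).eventually_iff.1 (hf.and hderiv)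
  have hasDeriv : ∀ t ∈ Ioo 0 d,
      HasDerivAt (fun t ↦ f t - c * log t) (deriv f t - c * t⁻¹) t := fun t ht ↦
    (hd' ht).1.hasDerivAt.sub ((hasDerivAt_log ht.1.ne').const_mul c)
  have hmono : MonotoneOn (fun t ↦ f t - c * log t) (Ioo 0 d) := by
    refine monotoneOn_of_hasDerivWithinAt_nonneg (convex_Ioo 0 d)
      (fun t ht ↦ (hasDeriv t ht).continuousAt.continuousWithinAt)
      (fun t ht ↦ (hasDeriv t (interior_subset ht)).hasDerivWithinAt)
      (fun t ht ↦ sub_nonneg.2 (hd' (interior_subset ht)).2)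
  have hs : d / 2 ∈ Ioo 0 d := ⟨half_pos hd, half_lt_self hd⟩
  have hlog : Tendsto (fun t ↦ c * log t + (f (d / 2) - c * log (d / 2))) (𝓝[>] 0) atBot :=
    tendsto_atBot_add_const_right _ _ (tendsto_log_nhdsGT_zero.const_mul_atBot hc)
  refine tendsto_atBot_mono' _ ?_ hlog
  filter_upwards [Ioo_mem_nhdsGT hs.1] with t ht
  linarith [hmono ⟨ht.1, ht.2.trans hs.2⟩ hs ht.2.le]

theorem deriv_nonpos_of_antitoneOn_mul_deriv (hf : DifferentiableOn ℝ f (Ioo 0 d))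
    (hm : ∀ t ∈ Ioo 0 d, 0 < m t) (hmO : m =O[𝓝[>] 0] id)
    (hanti : AntitoneOn (fun t ↦ m t * deriv f t) (Ioo 0 d))
    (hlim : Tendsto f (𝓝[>] 0) (𝓝 L)) : ∀ s ∈ Ioo 0 d, deriv f s ≤ 0 := by
  intro s hs
  by_contra! hpos
  obtain ⟨A, hA, hmA⟩ := hmO.exists_pos
  have hflux : 0 < m s * deriv f s := mul_pos (hm s hs) hpos
  have hsub : ∀ t ∈ Ioo 0 s, t ∈ Ioo 0 d := fun t ht ↦ ⟨ht.1, ht.2.trans hs.2⟩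
  have hdiff : ∀ᶠ t in 𝓝[>] 0, DifferentiableAt ℝ f t := by
    filter_upwards [Ioo_mem_nhdsGT hs.1] with t ht
    exact hf.differentiableAt (isOpen_Ioo.mem_nhds (hsub t ht))
  have hblowup : ∀ᶠ t in 𝓝[>] 0, m s * deriv f s / A * t⁻¹ ≤ deriv f t := by
    filter_upwards [Ioo_mem_nhdsGT hs.1, hmA.bound] with t ht hmt
    have hmt0 := hm t (hsub t ht)
    have hle : m s * deriv f s ≤ m t * deriv f t := hanti (hsub t ht) hs ht.2.le
    have hft : 0 < deriv f t := pos_of_mul_pos_right (hflux.trans_le hle) hmt0.le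
    rw [id, norm_of_nonneg hmt0.le, norm_of_nonneg ht.1.le] at hmt
    rw [← div_eq_mul_inv, div_div, div_le_iff₀' (mul_pos hA ht.1)]
    exact hle.trans (by gcongr)
  exact not_tendsto_nhds_of_tendsto_atBot
    (tendsto_nhdsGT_zero_atBot_of_mul_inv_le_deriv (div_pos hflux hA) hdiff hblowup) L hlim

theorem le_of_tendsto_of_antitoneOn_mul_deriv (hf : DifferentiableOn ℝ f (Ioo 0 d))
    (hm : ∀ t ∈ Ioo 0 d, 0 < m t) (hmO : m =O[𝓝[>] 0] id)
    (hanti : AntitoneOn (fun t ↦ m t * deriv f t) (Ioo 0 d))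
    (hlim : Tendsto f (𝓝[>] 0) (𝓝 L)) : ∀ s ∈ Ioo 0 d, f s ≤ L := by
  intro s hs
  have hfanti : AntitoneOn f (Ioo 0 d) :=
    antitoneOn_of_deriv_nonpos (convex_Ioo 0 d) hf.continuousOn (hf.mono interior_subset)
      fun t ht ↦ deriv_nonpos_of_antitoneOn_mul_deriv hf hm hmO hanti hlim t (interior_subset ht)
  refine ge_of_tendsto hlim ?_
  filter_upwards [Ioo_mem_nhdsGT hs.1] with t ht
  exact hfanti ⟨ht.1, ht.2.trans hs.2⟩ hs ht.2.le

theorem pos_of_tendsto_of_antitoneOn_wronskian (hd : 0 < d)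
    (hw : DifferentiableOn ℝ w (Ioo 0 d)) (hh : DifferentiableOn ℝ h (Ioo 0 d))
    (hwpos : ∀ t ∈ Ioo 0 d, 0 < w t) (hhpos : ∀ t ∈ Ioo 0 d, 0 < h t)
    (hρ : ∀ t ∈ Ioo 0 d, 0 < ρ t) (hρO : ρ =O[𝓝[>] 0] id)
    (hanti : AntitoneOn (fun t ↦ ρ t * (deriv w t * h t - w t * deriv h t)) (Ioo 0 d))
    (hhlim : Tendsto h (𝓝[>] 0) (𝓝 H)) (hH : 0 < H) (hlim : Tendsto w (𝓝[>] 0) (𝓝 L)) :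
    0 < L := by
  have hne : ∀ t ∈ Ioo 0 d, h t ≠ 0 := fun t ht ↦ (hhpos t ht).ne'
  have hflux : EqOn (fun t ↦ ρ t * (deriv w t * h t - w t * deriv h t))
      (fun t ↦ ρ t * h t ^ 2 * deriv (w / h) t) (Ioo 0 d) := by
    intro t ht
    have hnhds := isOpen_Ioo.mem_nhds ht
    have hht := hne t ht
    simp only [deriv_div (hw.differentiableAt hnhds) (hh.differentiableAt hnhds) hht]
    field_simp
  have hweightO : (fun t ↦ ρ t * h t ^ 2) =O[𝓝[>] 0] id := by
    simpa only [mul_one] using! hρO.mul ((hhlim.pow 2).isBigO_one ℝ)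
  have hmid : d / 2 ∈ Ioo 0 d := ⟨half_pos hd, half_lt_self hd⟩
  have hle : w (d / 2) / h (d / 2) ≤ L / H :=
    le_of_tendsto_of_antitoneOn_mul_deriv (hw.div hh hne)
      (fun t ht ↦ mul_pos (hρ t ht) (pow_pos (hhpos t ht) 2)) hweightO (hanti.congr hflux)
      (hlim.div hhlim hH.ne') _ hmid
  exact (div_pos_iff_of_pos_right hH).1 ((div_pos (hwpos _ hmid) (hhpos _ hmid)).trans_le hle)

end WeightedDerivative

/-- The linear second-order part of the transformed angular equation, which has `a = α₊` and
`b = n - 1`. Its first-order coefficient is singular at `t = 0`, so it is only meant for `t ≠ 0`. -/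
noncomputable def angularOp (a b : ℝ) (u : ℝ → ℝ) (t : ℝ) : ℝ :=
  (1 - t ^ 2) * deriv (deriv u) t + (2 * a * (1 - t ^ 2) / t - b * t) * deriv u t

/-- The integrating factor which puts `angularOp a b` in divergence form on `(0, 1)`. -/
noncomputable def angularWeight (a b t : ℝ) : ℝ :=
  t ^ (2 * a) * (1 - t ^ 2) ^ (b / 2)

section AngularOperator

variable {a b C t : ℝ} {u v w : ℝ → ℝ}

theorem one_sub_sq_pos (ht : t ∈ Ioo (0 : ℝ) 1) : 0 < 1 - t ^ 2 :=
  sub_pos.2 (pow_lt_one₀ ht.1.le ht.2 two_ne_zero)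

theorem angularWeight_pos (ht : t ∈ Ioo (0 : ℝ) 1) : 0 < angularWeight a b t :=
  mul_pos (rpow_pos_of_pos ht.1 _) (rpow_pos_of_pos (one_sub_sq_pos ht) _)

theorem angularWeight_isBigO_id (ha : 1 / 2 ≤ a) : angularWeight a b =O[𝓝[>] 0] id := by
  have hpow : (fun t : ℝ ↦ t ^ (2 * a)) =O[𝓝[>] 0] id := by
    refine IsBigO.of_bound 1 ?_
    filter_upwards [Ioo_mem_nhdsGT one_pos] with t ht
    rw [one_mul, id, norm_of_nonneg (rpow_nonneg ht.1.le _), norm_of_nonneg ht.1.le]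
    exact rpow_le_self_of_le_one ht.1.le ht.2.le (by linarith)
  have hcont : ContinuousAt (fun t : ℝ ↦ (1 - t ^ 2) ^ (b / 2)) 0 :=
    ContinuousAt.rpow_const (by fun_prop) (Or.inl (by norm_num))
  simpa only [mul_one] using! hpow.mul ((hcont.tendsto.mono_left nhdsWithin_le_nhds).isBigO_one ℝ)

theorem hasDerivAt_angularWeight (ht : t ∈ Ioo (0 : ℝ) 1) :
    HasDerivAt (angularWeight a b)
      (angularWeight a b t * (2 * a / t - b * t / (1 - t ^ 2))) t := by
  have ht0 := ht.1.ne'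
  have hq := (one_sub_sq_pos ht).ne'
  have hpow : HasDerivAt (fun t : ℝ ↦ t ^ (2 * a)) (2 * a * t ^ (2 * a - 1)) t :=
    hasDerivAt_rpow_const (Or.inl ht0)
  have hbase : HasDerivAt (fun t : ℝ ↦ 1 - t ^ 2) (-(2 * t)) t := by
    simpa using (hasDerivAt_pow 2 t).const_sub 1
  refine (hpow.mul (hbase.rpow_const (p := b / 2) (Or.inl hq))).congr_deriv ?_
  rw [rpow_sub_one ht0, rpow_sub_one hq, angularWeight]
  field_simp
  ring

theorem hasDerivAt_angularWeight_mul_deriv (ht : t ∈ Ioo (0 : ℝ) 1)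
    (hu : DifferentiableAt ℝ (deriv u) t) :
    HasDerivAt (fun t ↦ angularWeight a b t * deriv u t)
      (angularWeight a b t / (1 - t ^ 2) * angularOp a b u t) t := by
  have ht0 := ht.1.ne'
  have hq := (one_sub_sq_pos ht).ne'
  refine ((hasDerivAt_angularWeight ht).mul hu.hasDerivAt).congr_deriv ?_
  rw [angularOp]
  field_simp
  ring

theorem hasDerivAt_angularWeight_mul_wronskian (ht : t ∈ Ioo (0 : ℝ) 1)
    (hu : DifferentiableAt ℝ u t) (hu' : DifferentiableAt ℝ (deriv u) t)
    (hv : DifferentiableAt ℝ v t) (hv' : DifferentiableAt ℝ (deriv v) t) :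
    HasDerivAt (fun t ↦ angularWeight a b t * (deriv u t * v t - u t * deriv v t))
      (angularWeight a b t / (1 - t ^ 2) *
        (angularOp a b u t * v t - u t * angularOp a b v t)) t := by
  have hflux := ((hasDerivAt_angularWeight_mul_deriv (a := a) (b := b) ht hu').mul
    hv.hasDerivAt).sub
    (hu.hasDerivAt.mul (hasDerivAt_angularWeight_mul_deriv (a := a) (b := b) ht hv'))
  refine (hflux.congr_deriv (by ring)).congr_of_eventuallyEq (Eventually.of_forall fun s ↦ ?_)
  simp only [Pi.sub_apply, Pi.mul_apply]
  ring

theorem deriv_exp_mul_sq (C : ℝ) :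
    deriv (fun t ↦ exp (C * t ^ 2)) = fun t ↦ 2 * C * t * exp (C * t ^ 2) := by
  funext t
  refine ((((hasDerivAt_pow 2 t).const_mul C).exp).congr_deriv ?_).deriv
  push_cast
  ring

theorem angularOp_exp_mul_sq (a b C : ℝ) (ht : t ≠ 0) :
    angularOp a b (fun t ↦ exp (C * t ^ 2)) t =
      (C * ((2 + 4 * a) * (1 - t ^ 2) - 2 * b * t ^ 2) + 4 * C ^ 2 * t ^ 2 * (1 - t ^ 2)) *
        exp (C * t ^ 2) := by
  have hsecond : deriv (fun t ↦ 2 * C * t * exp (C * t ^ 2)) t =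
      (2 * C + 4 * C ^ 2 * t ^ 2) * exp (C * t ^ 2) := by
    refine ((((hasDerivAt_id t).const_mul (2 * C)).mul
      (((hasDerivAt_pow 2 t).const_mul C).exp)).congr_deriv ?_).deriv
    simp only [id]
    push_cast
    ring
  rw [angularOp, deriv_exp_mul_sq, hsecond]
  field_simp
  ring

theorem eventually_mul_exp_le_angularOp (ha : 0 ≤ a) (hC : 0 ≤ C) :
    ∀ᶠ t in 𝓝[>] 0, C * exp (C * t ^ 2) ≤ angularOp a b (fun t ↦ exp (C * t ^ 2)) t := by
  have hcont : ContinuousAt (fun t : ℝ ↦ (2 + 4 * a) * (1 - t ^ 2) - 2 * b * t ^ 2) 0 := by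
    fun_prop
  have hcoeff : ∀ᶠ t in 𝓝[>] (0 : ℝ), 1 < (2 + 4 * a) * (1 - t ^ 2) - 2 * b * t ^ 2 :=
    nhdsWithin_le_nhds (hcont.eventually (lt_mem_nhds (by norm_num; linarith)))
  filter_upwards [hcoeff, Ioo_mem_nhdsGT one_pos] with t hcoeff ht
  have hrest : 0 ≤ 4 * C ^ 2 * t ^ 2 * (1 - t ^ 2) :=
    mul_nonneg (by positivity) (one_sub_sq_pos ht).le
  rw [angularOp_exp_mul_sq a b C ht.1.ne']
  gcongr
  exact (le_mul_of_one_le_right hC hcoeff.le).trans (le_add_of_nonneg_right hrest)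

theorem pos_of_tendsto_of_angularOp_le (ha : 1 / 2 ≤ a) (hC : 0 ≤ C) {L : ℝ}
    (hw : ∀ᶠ t in 𝓝[>] 0, DifferentiableAt ℝ w t)
    (hw' : ∀ᶠ t in 𝓝[>] 0, DifferentiableAt ℝ (deriv w) t)
    (hpos : ∀ᶠ t in 𝓝[>] 0, 0 < w t)
    (hsuper : ∀ᶠ t in 𝓝[>] 0, angularOp a b w t ≤ C * w t)
    (hlim : Tendsto w (𝓝[>] 0) (𝓝 L)) : 0 < L := by
  set h : ℝ → ℝ := fun t ↦ exp (C * t ^ 2) with h_def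
  have hh : Differentiable ℝ h := by fun_prop
  have hh' : Differentiable ℝ (deriv h) := by
    rw [h_def, deriv_exp_mul_sq]
    fun_prop
  have hhlim : Tendsto h (𝓝[>] 0) (𝓝 (h 0)) := hh.continuous.continuousWithinAt
  have hunit : ∀ᶠ t in 𝓝[>] (0 : ℝ), t ∈ Ioo 0 1 := Ioo_mem_nhdsGT one_pos
  have hsub : ∀ᶠ t in 𝓝[>] 0, C * h t ≤ angularOp a b h t :=
    eventually_mul_exp_le_angularOp (by linarith) hC
  obtain ⟨d, hd, hd'⟩ := (nhdsGT_basis (0 : ℝ)).eventually_iff.1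
    (hunit.and (hw.and (hw'.and (hpos.and (hsuper.and hsub)))))
  have hwronskian := fun t (ht : t ∈ Ioo 0 d) ↦
    have ⟨ht1, hwt, hwt', _⟩ := hd' ht
    hasDerivAt_angularWeight_mul_wronskian (a := a) (b := b) ht1 hwt hwt' (hh t) (hh' t)
  have hanti : AntitoneOn
      (fun t ↦ angularWeight a b t * (deriv w t * h t - w t * deriv h t)) (Ioo 0 d) := by
    refine antitoneOn_of_hasDerivWithinAt_nonpos (convex_Ioo 0 d)
      (fun t ht ↦ (hwronskian t ht).continuousAt.continuousWithinAt)
      (fun t ht ↦ (hwronskian t (interior_subset ht)).hasDerivWithinAt) fun t ht ↦ ?_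
    obtain ⟨ht1, _, _, hwt, hupper, hlower⟩ := hd' (interior_subset ht)
    refine mul_nonpos_of_nonneg_of_nonpos
      (div_pos (angularWeight_pos ht1) (one_sub_sq_pos ht1)).le (sub_nonpos.2 ?_)
    calc angularOp a b w t * h t ≤ C * w t * h t := by gcongr
      _ = w t * (C * h t) := by ring
      _ ≤ w t * angularOp a b h t := by gcongr
  exact pos_of_tendsto_of_antitoneOn_wronskian hd
    (fun t ht ↦ (hd' ht).2.1.differentiableWithinAt) hh.differentiableOn
    (fun t ht ↦ (hd' ht).2.2.2.1) (fun t _ ↦ exp_pos _)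
    (fun t ht ↦ angularWeight_pos (hd' ht).1) (angularWeight_isBigO_id ha) hanti hhlim
    (exp_pos _) hlim

end AngularOperator

theorem exists_eventually_rpow_mul_rpow_sub_le {w : ℝ → ℝ} {q p L : ℝ} (K : ℝ) (hq : 0 ≤ q)
    (hp : 1 ≤ p) (hpos : ∀ᶠ t in 𝓝[>] 0, 0 < w t) (hlim : Tendsto w (𝓝[>] 0) (𝓝 L)) :
    ∃ C, 0 ≤ C ∧ ∀ᶠ t in 𝓝[>] 0, t ^ q * w t ^ p - K * w t ≤ C * w t := by
  refine ⟨(|L| + 1) ^ (p - 1) + |K|, by positivity, ?_⟩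
  have hbound : ∀ᶠ t in 𝓝[>] 0, w t < |L| + 1 :=
    hlim.eventually (gt_mem_nhds ((le_abs_self L).trans_lt (lt_add_one _)))
  filter_upwards [Ioo_mem_nhdsGT one_pos, hpos, hbound] with t ht hwt hwL
  have hpower : t ^ q * w t ^ p ≤ (|L| + 1) ^ (p - 1) * w t := by
    calc t ^ q * w t ^ p ≤ 1 * w t ^ p := by
          gcongr
          exact rpow_le_one ht.1.le ht.2.le hq
      _ = w t ^ (p - 1) * w t := by rw [one_mul, ← rpow_add_one hwt.ne', sub_add_cancel]
      _ ≤ (|L| + 1) ^ (p - 1) * w t := by gcongr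
  have hlinear : -K * w t ≤ |K| * w t := by gcongr; exact neg_le_abs K
  linarith

theorem half_le_aPlus (μ : ℝ) : 1 / 2 ≤ aPlus μ :=
  le_add_of_nonneg_right (sqrt_nonneg _)

theorem stmt12_general {a b K p L : ℝ} (ha : 1 / 2 ≤ a) (hp : 1 ≤ p) {w : ℝ → ℝ}
    (hw : ∀ᶠ t in 𝓝[>] 0, ContDiffAt ℝ 2 w t)
    (hpos : ∀ᶠ t in 𝓝[>] 0, 0 < w t)
    (hode : ∀ᶠ t in 𝓝[>] 0,
      (1 - t ^ 2) * deriv (deriv w) t + (2 * a * (1 - t ^ 2) / t - b * t) * deriv w t + K * w t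
        = t ^ (a * (p - 1)) * w t ^ p)
    (hlim : Tendsto w (𝓝[>] 0) (𝓝 L)) : 0 < L := by
  have hq : 0 ≤ a * (p - 1) := mul_nonneg (by linarith) (by linarith)
  obtain ⟨C, hC, hnonlinear⟩ := exists_eventually_rpow_mul_rpow_sub_le K hq hp hpos hlim
  have hsuper : ∀ᶠ t in 𝓝[>] 0, angularOp a b w t ≤ C * w t := by
    filter_upwards [hode, hnonlinear] with t ht hCt
    exact (eq_sub_of_add_eq ht).trans_le hCt
  refine pos_of_tendsto_of_angularOp_le ha hC ?_ ?_ hpos hsuper hlim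
  · exact hw.mono fun t ht ↦ ht.differentiableAt two_ne_zero
  · exact hw.mono fun t ht ↦ (ht.derivWithin (m := 1) (by norm_num)).differentiableAt one_ne_zero

end

/-- if `Λ₀ := Λ(−2/(p−1)) − Λ(α₊) > 0` and `w > 0` solves the
transformed angular equation on `(0,1)` and extends continuously to `t = 0`
with finite limit `L`, then `L > 0`. -/
theorem stmt12 (n : ℕ) (hn : 2 ≤ n) (μ p : ℝ) (hμ : μ < 1 / 4) (hp1 : 1 < p)
    (hΛ : 0 < Lam n (-(2 / (p - 1))) - Lam n (aPlus μ))
    (w : ℝ → ℝ)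
    (hC2 : ContDiffOn ℝ 2 w (Set.Ioo 0 1))
    (hpos : ∀ t ∈ Set.Ioo (0 : ℝ) 1, 0 < w t)
    (hode : ∀ t ∈ Set.Ioo (0 : ℝ) 1,
      (1 - t ^ 2) * deriv (deriv w) t
        + (2 * aPlus μ * (1 - t ^ 2) / t - ((n : ℝ) - 1) * t) * deriv w t
        + (Lam n (-(2 / (p - 1))) - Lam n (aPlus μ)) * w t
        = t ^ (aPlus μ * (p - 1)) * w t ^ p)
    (L : ℝ) (hlim : Filter.Tendsto w (nhdsWithin 0 (Set.Ioi 0)) (nhds L)) :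
    0 < L := by
  have near {P : ℝ → Prop} := Filter.eventually_of_mem (P := P) (Ioo_mem_nhdsGT one_pos)
  exact stmt12_general (half_le_aPlus μ) hp1.le
    (near fun t ht ↦ hC2.contDiffAt (isOpen_Ioo.mem_nhds ht)) (near hpos) (near hode) hlim
end

section
/- (Phragmén–Lindelöf type estimate.) Let n ≥ 2, μ < 1/4 and R > 0. Let h ∈ C²(ℝⁿ₊ ∩ B_R(0)) satisfy Δh + (μ/x₁²)h ≥ 0 on ℝⁿ₊ ∩ B_R(0) (h is L_μ-subharmonic). Assume: (a) there exist ρ ∈ (0,R) and C_ρ > 0 such that h(x) ≤ C_ρ x₁^{α₊} for all x ∈ ℝⁿ₊ with ρ < |x| < R; and (b) for every ε > 0 there exists δ > 0 such that h(x) ≤ ε ( x₁^{α₋} + x₁^{α₊} |x|^{−(n−2+2α₊)} ) for all x ∈ ℝⁿ₊ ∩ B_R(0) with 0 < x₁ < δ. Then there exists C > 0 such that h(x) ≤ C x₁^{α₊} for all x ∈ ℝⁿ₊ ∩ B_R(0) with x₁ sufficiently small. -/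
open Real Set

/-!
For a radial `φ`, the operator `Δ + μ / x₁²` applied to `x₁ ^ a * φ (|x|²)` is `x₁ ^ a` times the
Laplacian of `φ (|x|²)` in the effective dimension `n + 2a`, plus the potential term
`(μ - a(1 - a)) / x₁²`. With `a = α` and `φ` the fundamental solution in that dimension, this
shows that `C x₁ ^ α + ε (x₁ ^ β + x₁ ^ α |x| ^ (-(n - 2 + 2α)))` is a supersolution on a half-ball.
It lies above the subsolution `h` outside a compact subset: the first term handles the sphere, the
second one the flat boundary. The strict positive supersolution `x₁ ^ γ (R² - |x|²)`, `γ ≥ 1/2`,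
provides a comparison principle, so `h` lies below the barrier everywhere; then `ε → 0`.
-/

open Filter Topology Metric Module InnerProductSpace Laplacian Gradient

section SecondDerivative

theorem deriv_deriv_nonpos_of_isLocalMax {f : ℝ → ℝ} {a : ℝ} (hf : ContinuousAt f a)
    (hmax : IsLocalMax f a) : deriv (deriv f) a ≤ 0 := by
  by_contra! hpos
  have hmin : IsLocalMin f a := isLocalMin_of_deriv_deriv_pos hpos hmax.deriv_eq_zero hf
  have hconst : f =ᶠ[𝓝 a] fun _ => f a := by
    filter_upwards [hmin, hmax] with t hge hle using le_antisymm hle hge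
  have hzero : deriv (deriv f) a = 0 := by rw [hconst.deriv.deriv_eq]; simp
  exact hpos.ne' hzero

theorem deriv_deriv_rpow_const (a t : ℝ) :
    deriv (deriv fun t : ℝ => t ^ a) t = a * (a - 1) * t ^ (a - 2) := by
  rw [Real.deriv_rpow_const', deriv_const_mul_field, Real.deriv_rpow_const]
  ring_nf

variable {E : Type*} [NormedAddCommGroup E] [NormedSpace ℝ E] {f g : E → ℝ} {x : E}

theorem differentiableAt_fderiv_of_contDiffAt_two (hf : ContDiffAt ℝ 2 f x) :
    DifferentiableAt ℝ (fderiv ℝ f) x :=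
  (hf.fderiv_right (m := 1) (by norm_num)).differentiableAt one_ne_zero

theorem deriv_deriv_comp_add_smul (hf : ContDiffAt ℝ 2 f x) (v : E) :
    deriv (deriv fun t : ℝ => f (x + t • v)) 0 = iteratedFDeriv ℝ 2 f x ![v, v] := by
  have hline (t : ℝ) : HasDerivAt (fun t : ℝ => x + t • v) v t := by
    simpa using ((hasDerivAt_id t).smul_const v).const_add x
  have hlim : Tendsto (fun t : ℝ => x + t • v) (𝓝 0) (𝓝 x) := by
    simpa using (hline 0).continuousAt.tendsto
  have hfirst : deriv (fun t : ℝ => f (x + t • v)) =ᶠ[𝓝 0] fun t => fderiv ℝ f (x + t • v) v := by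
    filter_upwards [hlim.eventually (hf.eventually (by simp))] with t ht
    exact ((ht.differentiableAt two_ne_zero).hasFDerivAt.comp_hasDerivAt t (hline t)).deriv
  have hsecond : HasFDerivAt (fderiv ℝ f) (fderiv ℝ (fderiv ℝ f) x) (x + (0 : ℝ) • v) := by
    simpa using (differentiableAt_fderiv_of_contDiffAt_two hf).hasFDerivAt
  rw [hfirst.deriv_eq, iteratedFDeriv_two_apply]
  have hcomp : HasDerivAt (fun t : ℝ => fderiv ℝ f (x + t • v)) (fderiv ℝ (fderiv ℝ f) x v) 0 :=
    hsecond.comp_hasDerivAt 0 (hline 0)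
  simpa using (hcomp.clm_apply (hasDerivAt_const 0 v)).deriv

theorem iteratedFDeriv_two_nonpos_of_isLocalMax (hf : ContDiffAt ℝ 2 f x)
    (hmax : IsLocalMax f x) (v : E) : iteratedFDeriv ℝ 2 f x ![v, v] ≤ 0 := by
  have hline : ContinuousAt (fun t : ℝ => x + t • v) 0 := by fun_prop
  have hx : x = x + (0 : ℝ) • v := by simp
  rw [← deriv_deriv_comp_add_smul hf v]
  rw [hx] at hmax hf
  exact deriv_deriv_nonpos_of_isLocalMax
    (ContinuousAt.comp (f := fun t : ℝ => x + t • v) hf.continuousAt hline) (hline.eventually hmax)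

theorem iteratedFDeriv_two_mul_apply (hf : ContDiffAt ℝ 2 f x) (hg : ContDiffAt ℝ 2 g x) (v : E) :
    iteratedFDeriv ℝ 2 (f * g) x ![v, v] =
      f x * iteratedFDeriv ℝ 2 g x ![v, v] + 2 * (fderiv ℝ f x v * fderiv ℝ g x v) +
        g x * iteratedFDeriv ℝ 2 f x ![v, v] := by
  have hfirst : fderiv ℝ (f * g) =ᶠ[𝓝 x] fun y => f y • fderiv ℝ g y + g y • fderiv ℝ f y := by
    filter_upwards [hf.eventually (by simp), hg.eventually (by simp)] with y hfy hgy
    exact fderiv_mul (hfy.differentiableAt two_ne_zero) (hgy.differentiableAt two_ne_zero)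
  have hdf := (hf.differentiableAt two_ne_zero).hasFDerivAt
  have hdg := (hg.differentiableAt two_ne_zero).hasFDerivAt
  have hddf := (differentiableAt_fderiv_of_contDiffAt_two hf).hasFDerivAt
  have hddg := (differentiableAt_fderiv_of_contDiffAt_two hg).hasFDerivAt
  have hsecond := ((hdf.smul hddg).add (hdg.smul hddf)).fderiv
  simp only [iteratedFDeriv_two_apply, hfirst.fderiv_eq]
  refine (congrArg (fun L => L v v) hsecond).trans ?_
  simp only [add_apply, smul_apply, ContinuousLinearMap.smulRight_apply, smul_eq_mul,
    Matrix.cons_val_zero, Matrix.cons_val_one, Matrix.cons_val_fin_one]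
  ring

theorem iteratedFDeriv_two_comp_apply {φ : ℝ → ℝ} (hφ : ContDiffAt ℝ 2 φ (f x))
    (hf : ContDiffAt ℝ 2 f x) (v : E) :
    iteratedFDeriv ℝ 2 (φ ∘ f) x ![v, v] =
      deriv (deriv φ) (f x) * fderiv ℝ f x v ^ 2 +
        deriv φ (f x) * iteratedFDeriv ℝ 2 f x ![v, v] := by
  have hfirst : fderiv ℝ (φ ∘ f) =ᶠ[𝓝 x] fun y => deriv φ (f y) • fderiv ℝ f y := by
    filter_upwards [hf.eventually (by simp),
      hf.continuousAt.tendsto.eventually (hφ.eventually (by simp))] with y hfy hφy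
    exact ((hφy.differentiableAt two_ne_zero).hasDerivAt.comp_hasFDerivAt y
      (hfy.differentiableAt two_ne_zero).hasFDerivAt).fderiv
  have hdf := (hf.differentiableAt two_ne_zero).hasFDerivAt
  have hddf := (differentiableAt_fderiv_of_contDiffAt_two hf).hasFDerivAt
  have hddφ : HasDerivAt (deriv φ) (deriv (deriv φ) (f x)) (f x) :=
    ((differentiableAt_fderiv_of_contDiffAt_two hφ).clm_apply
      (differentiableAt_const (1 : ℝ))).hasDerivAt
  have hsecond := ((hddφ.comp_hasFDerivAt x hdf).smul hddf).fderiv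
  simp only [iteratedFDeriv_two_apply, hfirst.fderiv_eq]
  refine (congrArg (fun L => L v v) hsecond).trans ?_
  simp only [Function.comp_apply, add_apply, smul_apply, ContinuousLinearMap.smulRight_apply,
    smul_eq_mul, Matrix.cons_val_zero, Matrix.cons_val_one, Matrix.cons_val_fin_one]
  ring

end SecondDerivative

section Gradient

variable {E : Type*} [NormedAddCommGroup E] [InnerProductSpace ℝ E] [CompleteSpace E]
  {f : E → ℝ} {x : E}

theorem gradient_comp {φ : ℝ → ℝ} (hφ : DifferentiableAt ℝ φ (f x)) (hf : DifferentiableAt ℝ f x) :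
    ∇ (φ ∘ f) x = deriv φ (f x) • ∇ f x := by
  have hchain : HasFDerivAt (φ ∘ f) (deriv φ (f x) • fderiv ℝ f x) x :=
    hφ.hasDerivAt.comp_hasFDerivAt x hf.hasFDerivAt
  simp [gradient, hchain.fderiv]

theorem gradient_inner_left (e x : E) : ∇ (fun y => inner ℝ e y) x = e :=
  HasGradientAt.gradient (innerSL ℝ e).hasFDerivAt

theorem gradient_norm_sq (x : E) : ∇ (fun y : E => ‖y‖ ^ 2) x = (2 : ℝ) • x :=
  ext_inner_right ℝ fun v => by
    simp [inner_gradient_left, fderiv_norm_sq_apply, inner_smul_left]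

end Gradient

section Laplacian

variable {E : Type*} [NormedAddCommGroup E] [InnerProductSpace ℝ E] [FiniteDimensional ℝ E]
  {f g : E → ℝ} {x : E}

theorem laplacian_nonpos_of_isLocalMax (hf : ContDiffAt ℝ 2 f x) (hmax : IsLocalMax f x) :
    Δ f x ≤ 0 := by
  rw [laplacian_eq_iteratedFDeriv_stdOrthonormalBasis]
  exact Finset.sum_nonpos fun i _ => iteratedFDeriv_two_nonpos_of_isLocalMax hf hmax _

theorem laplacian_mul (hf : ContDiffAt ℝ 2 f x) (hg : ContDiffAt ℝ 2 g x) :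
    Δ (f * g) x = f x * Δ g x + 2 * inner ℝ (∇ f x) (∇ g x) + g x * Δ f x := by
  have hgrad : ∑ i, fderiv ℝ f x (stdOrthonormalBasis ℝ E i) *
      fderiv ℝ g x (stdOrthonormalBasis ℝ E i) = inner ℝ (∇ f x) (∇ g x) := by
    rw [← (stdOrthonormalBasis ℝ E).sum_inner_mul_inner]
    simp only [inner_gradient_left (y := stdOrthonormalBasis ℝ E _), inner_gradient_right,
      conj_trivial]
  simp only [laplacian_eq_iteratedFDeriv_stdOrthonormalBasis, iteratedFDeriv_two_mul_apply hf hg,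
    Finset.sum_add_distrib, ← Finset.mul_sum, hgrad]

theorem laplacian_comp {φ : ℝ → ℝ} (hφ : ContDiffAt ℝ 2 φ (f x)) (hf : ContDiffAt ℝ 2 f x) :
    Δ (φ ∘ f) x = deriv (deriv φ) (f x) * ‖∇ f x‖ ^ 2 + deriv φ (f x) * Δ f x := by
  have hgrad := (stdOrthonormalBasis ℝ E).sum_sq_inner_right (∇ f x)
  simp only [inner_gradient_right, conj_trivial] at hgrad
  simp only [laplacian_eq_iteratedFDeriv_stdOrthonormalBasis, iteratedFDeriv_two_comp_apply hφ hf,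
    Finset.sum_add_distrib, ← Finset.mul_sum, hgrad]

theorem laplacian_inner_left (e x : E) : Δ (fun y => inner ℝ e y) x = 0 := by
  have hfderiv : fderiv ℝ (fun y => inner ℝ e y) = fun _ => innerSL ℝ e :=
    funext fun _ => (innerSL ℝ e).fderiv
  simp [laplacian_eq_iteratedFDeriv_stdOrthonormalBasis, iteratedFDeriv_two_apply, hfderiv]

theorem laplacian_norm_sq (x : E) : Δ (fun y : E => ‖y‖ ^ 2) x = 2 * finrank ℝ E := by
  have hfderiv : fderiv ℝ (fun y : E => ‖y‖ ^ 2) = ⇑(2 • innerSL ℝ (E := E)) := fderiv_norm_sq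
  have hdiag (i) : iteratedFDeriv ℝ 2 (fun y : E => ‖y‖ ^ 2) x
      ![stdOrthonormalBasis ℝ E i, stdOrthonormalBasis ℝ E i] = 2 := by
    rw [iteratedFDeriv_two_apply, hfderiv, ContinuousLinearMap.fderiv]
    change (2 • inner ℝ (stdOrthonormalBasis ℝ E i) (stdOrthonormalBasis ℝ E i) : ℝ) = 2
    simp
  simp [laplacian_eq_iteratedFDeriv_stdOrthonormalBasis, hdiag, mul_comm]

end Laplacian

section Schrodinger

variable {E : Type*} [NormedAddCommGroup E] [InnerProductSpace ℝ E] [FiniteDimensional ℝ E]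
  {V u v : E → ℝ} {x : E}

/-- The Schrödinger operator `Δ + V` applied to `u`; its sign decides whether `u` is a sub- or
supersolution. -/
noncomputable def schrodingerOp (V u : E → ℝ) (x : E) : ℝ := Δ u x + V x * u x

theorem schrodingerOp_add (hu : ContDiffAt ℝ 2 u x) (hv : ContDiffAt ℝ 2 v x) :
    schrodingerOp V (u + v) x = schrodingerOp V u x + schrodingerOp V v x := by
  simp only [schrodingerOp, hu.laplacian_add hv, Pi.add_apply]
  ring

theorem schrodingerOp_sub (hu : ContDiffAt ℝ 2 u x) (hv : ContDiffAt ℝ 2 v x) :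
    schrodingerOp V (u - v) x = schrodingerOp V u x - schrodingerOp V v x := by
  simp only [schrodingerOp, hu.laplacian_sub hv, Pi.sub_apply]
  ring

theorem schrodingerOp_const_smul (c : ℝ) (hu : ContDiffAt ℝ 2 u x) :
    schrodingerOp V (c • u) x = c * schrodingerOp V u x := by
  simp only [schrodingerOp, laplacian_smul c hu, Pi.smul_apply, smul_eq_mul]
  ring

theorem schrodingerOp_nonpos_of_isLocalMax (hu : ContDiffAt ℝ 2 u x) (hmax : IsLocalMax u x)
    (hx : u x = 0) : schrodingerOp V u x ≤ 0 := by
  simpa [schrodingerOp, hx] using laplacian_nonpos_of_isLocalMax hu hmax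

-- `u` is compared with the smallest multiple `c • v` lying above it, which touches `u` inside `K`.
theorem nonpos_of_schrodingerOp_nonneg {U K : Set E} (hU : IsOpen U) (hK : IsCompact K)
    (hKU : K ⊆ U) (hu : ContDiffOn ℝ 2 u U) (hv : ContDiffOn ℝ 2 v U) (hv_pos : ∀ x ∈ U, 0 < v x)
    (hVv : ∀ x ∈ U, schrodingerOp V v x < 0) (hVu : ∀ x ∈ U, 0 ≤ schrodingerOp V u x)
    (hout : ∀ x ∈ U \ K, u x ≤ 0) : ∀ x ∈ U, u x ≤ 0 := by
  by_contra! ⟨y, hyU, hy⟩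
  have hyK : y ∈ K := by
    by_contra hyK
    exact hy.not_ge (hout y ⟨hyU, hyK⟩)
  have hcont : ContinuousOn (fun x => u x / v x) K :=
    (hu.continuousOn.mono hKU).div (hv.continuousOn.mono hKU) fun x hx => (hv_pos x (hKU hx)).ne'
  obtain ⟨z, hzK, hzmax⟩ := hK.exists_isMaxOn ⟨y, hyK⟩ hcont
  have hzU : z ∈ U := hKU hzK
  set c : ℝ := u z / v z with hc
  have hc_pos : 0 < c := (div_pos hy (hv_pos y hyU)).trans_le (hzmax hyK)
  have hle : ∀ x ∈ U, u x ≤ c * v x := by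
    intro x hx
    by_cases hxK : x ∈ K
    · exact (div_le_iff₀ (hv_pos x hx)).1 (hzmax hxK)
    · exact (hout x ⟨hx, hxK⟩).trans (mul_pos hc_pos (hv_pos x hx)).le
  have htouch : (u - c • v) z = 0 := by simp [hc, div_mul_cancel₀ _ (hv_pos z hzU).ne']
  have hmax : IsLocalMax (u - c • v) z := by
    filter_upwards [hU.mem_nhds hzU] with x hx
    simpa [htouch] using hle x hx
  have huz := hu.contDiffAt (hU.mem_nhds hzU)
  have hvz := hv.contDiffAt (hU.mem_nhds hzU)
  have hcvz : ContDiffAt ℝ 2 (c • v) z := hvz.const_smul c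
  have hnonpos : schrodingerOp V u z - c * schrodingerOp V v z ≤ 0 := by
    rw [← schrodingerOp_const_smul c hvz, ← schrodingerOp_sub huz hcvz]
    exact schrodingerOp_nonpos_of_isLocalMax (huz.sub hcvz) hmax htouch
  linarith [hVu z hzU, mul_neg_of_pos_of_neg hc_pos (hVv z hzU)]

end Schrodinger

section HardyPotential

variable {E : Type*} [NormedAddCommGroup E] [InnerProductSpace ℝ E]

/-- The inverse-square potential `μ / x₁²`, where `x₁ = ⟪e, x⟫` is the coordinate normal to the
boundary of the half-space `{x | 0 < ⟪e, x⟫}`. -/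
noncomputable def hardyPotential (e : E) (μ : ℝ) (x : E) : ℝ := μ / inner ℝ e x ^ 2

/-- The product `x₁ ^ a * φ (|x|²)` of a power of the normal coordinate and a radial function.
The radial factor is written in terms of `|x|²` so that it is smooth at the origin when `φ` is. -/
noncomputable def powMulRadial (e : E) (a : ℝ) (φ : ℝ → ℝ) (x : E) : ℝ :=
  inner ℝ e x ^ a * φ (‖x‖ ^ 2)

variable {e x : E} {a μ : ℝ} {φ : ℝ → ℝ} {k : WithTop ℕ∞}

theorem contDiffAt_inner_rpow (hx : 0 < inner ℝ e x) :
    ContDiffAt ℝ k (fun y => inner ℝ e y ^ a) x :=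
  (contDiffAt_const.inner ℝ contDiffAt_id).rpow_const_of_ne hx.ne'

theorem contDiffAt_comp_norm_sq (hφ : ContDiffAt ℝ k φ (‖x‖ ^ 2)) :
    ContDiffAt ℝ k (fun y : E => φ (‖y‖ ^ 2)) x :=
  hφ.comp x (contDiff_norm_sq ℝ).contDiffAt

theorem contDiffAt_powMulRadial (hx : 0 < inner ℝ e x) (hφ : ContDiffAt ℝ k φ (‖x‖ ^ 2)) :
    ContDiffAt ℝ k (powMulRadial e a φ) x :=
  (contDiffAt_inner_rpow hx).mul (contDiffAt_comp_norm_sq hφ)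

theorem gradient_inner_rpow [CompleteSpace E] (hx : 0 < inner ℝ e x) :
    ∇ (fun y => inner ℝ e y ^ a) x = (a * inner ℝ e x ^ (a - 1)) • e := by
  have hchain := gradient_comp (f := fun y => inner ℝ e y) (φ := fun t => t ^ a)
    (differentiableAt_rpow_const_of_ne a hx.ne') (innerSL ℝ e).differentiableAt
  rwa [gradient_inner_left, Real.deriv_rpow_const] at hchain

theorem gradient_comp_norm_sq [CompleteSpace E] (hφ : DifferentiableAt ℝ φ (‖x‖ ^ 2)) :
    ∇ (fun y : E => φ (‖y‖ ^ 2)) x = (2 * deriv φ (‖x‖ ^ 2)) • x := by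
  have hchain := gradient_comp (f := fun y : E => ‖y‖ ^ 2) hφ
    ((contDiff_norm_sq ℝ (n := 1)).differentiable one_ne_zero x)
  rw [gradient_norm_sq, smul_smul, mul_comm] at hchain
  exact hchain

variable [FiniteDimensional ℝ E]

theorem laplacian_inner_rpow (hx : 0 < inner ℝ e x) :
    Δ (fun y => inner ℝ e y ^ a) x = a * (a - 1) * inner ℝ e x ^ (a - 2) * ‖e‖ ^ 2 := by
  have hchain := laplacian_comp (f := fun y => inner ℝ e y) (φ := fun t => t ^ a)
    (contDiffAt_rpow_const_of_ne hx.ne') (innerSL ℝ e).contDiff.contDiffAt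
  rw [gradient_inner_left, laplacian_inner_left, deriv_deriv_rpow_const, mul_zero, add_zero]
    at hchain
  exact hchain

theorem laplacian_comp_norm_sq (hφ : ContDiffAt ℝ 2 φ (‖x‖ ^ 2)) :
    Δ (fun y : E => φ (‖y‖ ^ 2)) x =
      4 * ‖x‖ ^ 2 * deriv (deriv φ) (‖x‖ ^ 2) + 2 * finrank ℝ E * deriv φ (‖x‖ ^ 2) := by
  have hchain := laplacian_comp (f := fun y : E => ‖y‖ ^ 2) hφ (contDiff_norm_sq ℝ).contDiffAt
  rw [gradient_norm_sq, laplacian_norm_sq, norm_smul, Real.norm_ofNat] at hchain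
  refine hchain.trans ?_
  ring

theorem schrodingerOp_powMulRadial (he : ‖e‖ = 1) (hx : 0 < inner ℝ e x)
    (hφ : ContDiffAt ℝ 2 φ (‖x‖ ^ 2)) :
    schrodingerOp (hardyPotential e μ) (powMulRadial e a φ) x =
      inner ℝ e x ^ a *
        (4 * ‖x‖ ^ 2 * deriv (deriv φ) (‖x‖ ^ 2) +
          2 * (finrank ℝ E + 2 * a) * deriv φ (‖x‖ ^ 2) +
          (μ - a * (1 - a)) / inner ℝ e x ^ 2 * φ (‖x‖ ^ 2)) := by
  have hmul : Δ (powMulRadial e a φ) x = _ :=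
    laplacian_mul (contDiffAt_inner_rpow hx) (contDiffAt_comp_norm_sq hφ)
  rw [laplacian_inner_rpow hx, laplacian_comp_norm_sq hφ, gradient_inner_rpow hx,
    gradient_comp_norm_sq (hφ.differentiableAt two_ne_zero), inner_smul_left, inner_smul_right,
    conj_trivial, he, rpow_sub_one hx.ne', rpow_sub hx, rpow_two] at hmul
  rw [schrodingerOp, hmul, powMulRadial, hardyPotential]
  field_simp
  ring

theorem schrodingerOp_powMulRadial_le (he : ‖e‖ = 1) (hμ : μ ≤ a * (1 - a)) (hx : 0 < inner ℝ e x)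
    (hφ : ContDiffAt ℝ 2 φ (‖x‖ ^ 2)) (hφ_nonneg : 0 ≤ φ (‖x‖ ^ 2)) :
    schrodingerOp (hardyPotential e μ) (powMulRadial e a φ) x ≤
      inner ℝ e x ^ a *
        (4 * ‖x‖ ^ 2 * deriv (deriv φ) (‖x‖ ^ 2) +
          2 * (finrank ℝ E + 2 * a) * deriv φ (‖x‖ ^ 2)) := by
  have hpotential : (μ - a * (1 - a)) / inner ℝ e x ^ 2 * φ (‖x‖ ^ 2) ≤ 0 :=
    mul_nonpos_of_nonpos_of_nonneg
      (div_nonpos_of_nonpos_of_nonneg (sub_nonpos.2 hμ) (sq_nonneg _)) hφ_nonneg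
  rw [schrodingerOp_powMulRadial he hx hφ]
  exact mul_le_mul_of_nonneg_left (by linarith) (rpow_nonneg hx.le a)

end HardyPotential

section Barrier

variable {E : Type*} [NormedAddCommGroup E] [InnerProductSpace ℝ E]

/-- The half-ball of radius `R` centered at the origin with inner normal `e`. -/
def halfBall (e : E) (R : ℝ) : Set E := {x | 0 < inner ℝ e x} ∩ ball 0 R

/-- The Kelvin transform `x₁ ^ a * |x| ^ (-(n - 2 + 2a))` of `x₁ ^ a`, where `n = dim E`. -/
noncomputable def kelvinRpow (e : E) (a : ℝ) (x : E) : ℝ :=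
  inner ℝ e x ^ a * ‖x‖ ^ (-((finrank ℝ E : ℝ) - 2 + 2 * a))

/-- The comparison function `C x₁ ^ α + ε (x₁ ^ β + x₁ ^ α |x| ^ (-(n - 2 + 2α)))`: the first term
dominates near the sphere, the second one near the flat boundary. -/
noncomputable def barrier (e : E) (α β C ε : ℝ) : E → ℝ :=
  C • (fun x => inner ℝ e x ^ α) + ε • ((fun x => inner ℝ e x ^ β) + kelvinRpow e α)

variable {e x : E} {a α β μ ρ R C ε : ℝ} {k : WithTop ℕ∞}

theorem isOpen_halfBall (e : E) (R : ℝ) : IsOpen (halfBall e R) :=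
  (isOpen_lt continuous_const (by fun_prop)).inter isOpen_ball

theorem norm_pos_of_inner_pos (hx : 0 < inner ℝ e x) : 0 < ‖x‖ := by
  rw [norm_pos_iff]
  rintro rfl
  simp at hx

theorem kelvinRpow_eq_powMulRadial (e : E) (a : ℝ) :
    kelvinRpow e a = powMulRadial e a fun q => q ^ (-((finrank ℝ E : ℝ) - 2 + 2 * a) / 2) := by
  ext x
  rw [kelvinRpow, powMulRadial, ← rpow_natCast ‖x‖ 2, ← rpow_mul (norm_nonneg x)]
  congr 2
  push_cast
  ring

theorem contDiffAt_kelvinRpow (hx : 0 < inner ℝ e x) : ContDiffAt ℝ k (kelvinRpow e a) x := by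
  rw [kelvinRpow_eq_powMulRadial]
  exact contDiffAt_powMulRadial hx
    (contDiffAt_rpow_const_of_ne (pow_pos (norm_pos_of_inner_pos hx) 2).ne')

theorem inner_rpow_add_kelvinRpow_pos (hx : 0 < inner ℝ e x) :
    0 < inner ℝ e x ^ β + kelvinRpow e α x := by
  have hnorm := norm_pos_of_inner_pos hx
  unfold kelvinRpow
  positivity

theorem barrier_apply (e : E) (α β C ε : ℝ) (x : E) :
    barrier e α β C ε x =
      C * inner ℝ e x ^ α + ε * (inner ℝ e x ^ β + kelvinRpow e α x) :=
  rfl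

theorem le_barrier_of_le_or_le (hC : 0 ≤ C) (hε : 0 ≤ ε) (hx : 0 < inner ℝ e x) {t : ℝ}
    (ht : t ≤ C * inner ℝ e x ^ α ∨ t ≤ ε * (inner ℝ e x ^ β + kelvinRpow e α x)) :
    t ≤ barrier e α β C ε x := by
  rw [barrier_apply]
  rcases ht with ht | ht
  · exact le_add_of_le_of_nonneg ht (mul_nonneg hε (inner_rpow_add_kelvinRpow_pos hx).le)
  · exact le_add_of_nonneg_of_le (mul_nonneg hC (rpow_nonneg hx.le α)) ht

theorem contDiffAt_barrier (hx : 0 < inner ℝ e x) : ContDiffAt ℝ k (barrier e α β C ε) x :=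
  ((contDiffAt_inner_rpow hx).const_smul C).add
    (((contDiffAt_inner_rpow hx).add (contDiffAt_kelvinRpow hx)).const_smul ε)

variable [FiniteDimensional ℝ E]

theorem schrodingerOp_inner_rpow_nonpos (he : ‖e‖ = 1) (hμ : μ ≤ a * (1 - a))
    (hx : 0 < inner ℝ e x) :
    schrodingerOp (hardyPotential e μ) (fun y => inner ℝ e y ^ a) x ≤ 0 := by
  have hradial : (fun y => inner ℝ e y ^ a) = powMulRadial e a fun _ => 1 := by
    ext y
    rw [powMulRadial, mul_one]
  rw [hradial]
  exact (schrodingerOp_powMulRadial_le he hμ hx contDiffAt_const zero_le_one).trans_eq (by simp)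

theorem schrodingerOp_kelvinRpow_nonpos (he : ‖e‖ = 1) (hμ : μ ≤ a * (1 - a))
    (hx : 0 < inner ℝ e x) : schrodingerOp (hardyPotential e μ) (kelvinRpow e a) x ≤ 0 := by
  have hq : 0 < ‖x‖ ^ 2 := pow_pos (norm_pos_of_inner_pos hx) 2
  rw [kelvinRpow_eq_powMulRadial]
  refine (schrodingerOp_powMulRadial_le he hμ hx (contDiffAt_rpow_const_of_ne hq.ne')
    (rpow_nonneg hq.le _)).trans_eq ?_
  rw [deriv_deriv_rpow_const, Real.deriv_rpow_const, rpow_sub_one hq.ne', rpow_sub hq, rpow_two]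
  field_simp
  ring

theorem schrodingerOp_barrier_nonpos (he : ‖e‖ = 1) (hα : μ ≤ α * (1 - α))
    (hβ : μ ≤ β * (1 - β)) (hC : 0 ≤ C) (hε : 0 ≤ ε) (hx : 0 < inner ℝ e x) :
    schrodingerOp (hardyPotential e μ) (barrier e α β C ε) x ≤ 0 := by
  have hα₂ : ContDiffAt ℝ 2 (fun y => inner ℝ e y ^ α) x := contDiffAt_inner_rpow hx
  have hβ₂ : ContDiffAt ℝ 2 (fun y => inner ℝ e y ^ β) x := contDiffAt_inner_rpow hx
  have hκ₂ : ContDiffAt ℝ 2 (kelvinRpow e α) x := contDiffAt_kelvinRpow hx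
  have hsum₂ : ContDiffAt ℝ 2 ((fun y => inner ℝ e y ^ β) + kelvinRpow e α) x := hβ₂.add hκ₂
  have hsplit := schrodingerOp_add (V := hardyPotential e μ) (u := C • fun y => inner ℝ e y ^ α)
    (v := ε • ((fun y => inner ℝ e y ^ β) + kelvinRpow e α)) (hα₂.const_smul C) (hsum₂.const_smul ε)
  rw [barrier, hsplit, schrodingerOp_const_smul C hα₂, schrodingerOp_const_smul ε hsum₂,
    schrodingerOp_add hβ₂ hκ₂]
  exact add_nonpos (mul_nonpos_of_nonneg_of_nonpos hC (schrodingerOp_inner_rpow_nonpos he hα hx))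
    (mul_nonpos_of_nonneg_of_nonpos hε
      (add_nonpos (schrodingerOp_inner_rpow_nonpos he hβ hx)
        (schrodingerOp_kelvinRpow_nonpos he hα hx)))

theorem exists_pos_schrodingerOp_neg (he : ‖e‖ = 1) (hα : μ ≤ α * (1 - α)) (R : ℝ) :
    ∃ v : E → ℝ, ContDiffOn ℝ 2 v (halfBall e R) ∧ (∀ x ∈ halfBall e R, 0 < v x) ∧
      ∀ x ∈ halfBall e R, schrodingerOp (hardyPotential e μ) v x < 0 := by
  obtain ⟨γ, hγ, hμγ⟩ : ∃ γ : ℝ, 1 / 2 ≤ γ ∧ μ ≤ γ * (1 - γ) := by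
    rcases le_total (1 / 2) α with h | h
    · exact ⟨α, h, hα⟩
    · exact ⟨1 - α, by linarith, by linarith⟩
  have hφ (t : ℝ) : ContDiffAt ℝ 2 (fun q : ℝ => R ^ 2 - q) t := by fun_prop
  have hgap {x : E} (hx : x ∈ halfBall e R) : 0 < R ^ 2 - ‖x‖ ^ 2 := by
    have hxR : ‖x‖ < R := mem_ball_zero_iff.1 hx.2
    exact sub_pos.2 (pow_lt_pow_left₀ hxR (norm_nonneg x) two_ne_zero)
  refine ⟨powMulRadial e γ fun q => R ^ 2 - q,
    fun x hx => (contDiffAt_powMulRadial hx.1 (hφ _)).contDiffWithinAt,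
    fun x hx => mul_pos (rpow_pos_of_pos hx.1 γ) (hgap hx), fun x hx => ?_⟩
  have hx₁ : 0 < inner ℝ e x := hx.1
  have hderiv : deriv (fun q : ℝ => R ^ 2 - q) = fun _ => -1 := by
    ext
    simp
  refine (schrodingerOp_powMulRadial_le he hμγ hx₁ (hφ _) (hgap hx).le).trans_lt ?_
  rw [hderiv, deriv_const]
  exact mul_neg_of_pos_of_neg (rpow_pos_of_pos hx₁ γ) (by linarith)

variable {h : E → ℝ}

theorem le_barrier_of_schrodingerOp_nonneg (he : ‖e‖ = 1) (hα : μ ≤ α * (1 - α))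
    (hβ : μ ≤ β * (1 - β)) (hρ : ρ < R) (hC : 0 ≤ C) (hε : 0 < ε)
    (hC2 : ContDiffOn ℝ 2 h (halfBall e R))
    (hsub : ∀ x ∈ halfBall e R, 0 ≤ schrodingerOp (hardyPotential e μ) h x)
    (hsphere : ∀ x ∈ halfBall e R, ρ < ‖x‖ → h x ≤ C * inner ℝ e x ^ α)
    (hflat : ∃ δ > 0, ∀ x ∈ halfBall e R, inner ℝ e x < δ →
      h x ≤ ε * (inner ℝ e x ^ β + kelvinRpow e α x)) :
    ∀ x ∈ halfBall e R, h x ≤ barrier e α β C ε x := by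
  obtain ⟨δ, hδ, hflat⟩ := hflat
  obtain ⟨v, hv, hv_pos, hv_neg⟩ := exists_pos_schrodingerOp_neg he hα R
  have hbarrier : ∀ x ∈ halfBall e R, ContDiffAt ℝ 2 (barrier e α β C ε) x :=
    fun x hx => contDiffAt_barrier hx.1
  have hK : IsCompact ({x | δ ≤ inner ℝ e x} ∩ closedBall 0 ρ) :=
    (isCompact_closedBall 0 ρ).inter_left (isClosed_le continuous_const (by fun_prop))
  have hKU : {x | δ ≤ inner ℝ e x} ∩ closedBall 0 ρ ⊆ halfBall e R :=
    fun x hx => ⟨hδ.trans_le hx.1, closedBall_subset_ball hρ hx.2⟩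
  have hop : ∀ x ∈ halfBall e R,
      0 ≤ schrodingerOp (hardyPotential e μ) (h - barrier e α β C ε) x := by
    intro x hx
    rw [schrodingerOp_sub (hC2.contDiffAt ((isOpen_halfBall e R).mem_nhds hx)) (hbarrier x hx)]
    exact sub_nonneg.2
      ((schrodingerOp_barrier_nonpos he hα hβ hC hε.le hx.1).trans (hsub x hx))
  have hout : ∀ x ∈ halfBall e R \ ({x | δ ≤ inner ℝ e x} ∩ closedBall 0 ρ),
      (h - barrier e α β C ε) x ≤ 0 := by
    rintro x ⟨hx, hxK⟩
    refine sub_nonpos.2 (le_barrier_of_le_or_le hC hε.le hx.1 ?_)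
    rcases lt_or_ge (inner ℝ e x) δ with hxδ | hxδ
    · exact .inr (hflat x hx hxδ)
    · have hxρ : ρ < ‖x‖ := by
        by_contra! hxρ
        exact hxK ⟨hxδ, mem_closedBall_zero_iff.2 hxρ⟩
      exact .inl (hsphere x hx hxρ)
  exact fun x hx => sub_nonpos.1 (nonpos_of_schrodingerOp_nonneg (isOpen_halfBall e R) hK hKU
    (hC2.sub fun x hx => (hbarrier x hx).contDiffWithinAt) hv hv_pos hv_neg hop hout x hx)

end Barrier

theorem stmt13_general {E : Type*} [NormedAddCommGroup E] [InnerProductSpace ℝ E]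
    [FiniteDimensional ℝ E] {e : E} (he : ‖e‖ = 1) {α β μ ρ R C : ℝ} (hα : μ ≤ α * (1 - α))
    (hβ : μ ≤ β * (1 - β)) (hρ : ρ < R) (hC : 0 ≤ C) {h : E → ℝ}
    (hC2 : ContDiffOn ℝ 2 h (halfBall e R))
    (hsub : ∀ x ∈ halfBall e R, 0 ≤ Δ h x + μ / inner ℝ e x ^ 2 * h x)
    (hsphere : ∀ x ∈ halfBall e R, ρ < ‖x‖ → h x ≤ C * inner ℝ e x ^ α)
    (hflat : ∀ ε > 0, ∃ δ > 0, ∀ x ∈ halfBall e R, inner ℝ e x < δ →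
      h x ≤ ε * (inner ℝ e x ^ β +
        inner ℝ e x ^ α * ‖x‖ ^ (-((finrank ℝ E : ℝ) - 2 + 2 * α)))) :
    ∀ x ∈ halfBall e R, h x ≤ C * inner ℝ e x ^ α := by
  intro x hx
  set T : ℝ := inner ℝ e x ^ β + kelvinRpow e α x with hT
  have hT_pos : 0 < T := inner_rpow_add_kelvinRpow_pos hx.1
  refine le_of_forall_pos_le_add fun η hη => ?_
  have hle := le_barrier_of_schrodingerOp_nonneg he hα hβ hρ hC (div_pos hη hT_pos) hC2 hsub
    hsphere (hflat _ (div_pos hη hT_pos)) x hx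
  rwa [barrier_apply, ← hT, div_mul_cancel₀ _ hT_pos.ne'] at hle

theorem lap_eq_laplacian {n : ℕ} (u : EuclideanSpace ℝ (Fin n) → ℝ) : lap u = Δ u := by
  ext x
  simp [lap, laplacian_eq_iteratedFDeriv_orthonormalBasis u (EuclideanSpace.basisFun (Fin n) ℝ)]

theorem x1_eq_inner {n : ℕ} (hn : 0 < n) (x : EuclideanSpace ℝ (Fin n)) :
    x1 x = inner ℝ (EuclideanSpace.single ⟨0, hn⟩ 1) x := by
  simp [x1, hn, EuclideanSpace.inner_single_left]

theorem aPlus_mul_one_sub {μ : ℝ} (hμ : μ ≤ 1 / 4) : aPlus μ * (1 - aPlus μ) = μ := by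
  have hsq : √(1 / 4 - μ) ^ 2 = 1 / 4 - μ := sq_sqrt (by linarith)
  unfold aPlus
  linear_combination -hsq

theorem aMinus_mul_one_sub {μ : ℝ} (hμ : μ ≤ 1 / 4) : aMinus μ * (1 - aMinus μ) = μ := by
  have hsq : √(1 / 4 - μ) ^ 2 = 1 / 4 - μ := sq_sqrt (by linarith)
  unfold aMinus
  linear_combination -hsq

/-- Phragmén–Lindelöf type estimate: an `L_μ`-subharmonic `h` on
`ℝⁿ₊ ∩ B_R(0)` which is bounded by `C_ρ x₁^{α₊}` for `ρ < |x| < R` and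
`o(x₁^{α₋} + x₁^{α₊}|x|^{−(n−2+2α₊)})` as `x₁ → 0` satisfies
`h ≤ C x₁^{α₊}` near the boundary. -/
theorem stmt13 (n : ℕ) (hn : 2 ≤ n) (μ R : ℝ) (hμ : μ < 1 / 4) (hR : 0 < R)
    (h : EuclideanSpace ℝ (Fin n) → ℝ)
    (hC2 : ContDiffOn ℝ 2 h (halfSpace n ∩ Metric.ball 0 R))
    (hsub : ∀ x ∈ halfSpace n ∩ Metric.ball 0 R, 0 ≤ lap h x + (μ / (x1 x) ^ 2) * h x)
    (ha : ∃ ρ ∈ Set.Ioo (0 : ℝ) R, ∃ C > (0 : ℝ), ∀ x ∈ halfSpace n,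
      ρ < ‖x‖ → ‖x‖ < R → h x ≤ C * x1 x ^ aPlus μ)
    (hb : ∀ ε > (0 : ℝ), ∃ δ > (0 : ℝ), ∀ x ∈ halfSpace n ∩ Metric.ball 0 R, x1 x < δ →
      h x ≤ ε * (x1 x ^ aMinus μ + x1 x ^ aPlus μ * ‖x‖ ^ (-((n : ℝ) - 2 + 2 * aPlus μ)))) :
    ∃ C > (0 : ℝ), ∃ δ > (0 : ℝ), ∀ x ∈ halfSpace n ∩ Metric.ball 0 R, x1 x < δ →
      h x ≤ C * x1 x ^ aPlus μ := by
  obtain ⟨ρ, ⟨-, hρ⟩, C, hC, ha⟩ := ha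
  simp only [halfSpace, lap_eq_laplacian, x1_eq_inner (show 0 < n by omega)] at hC2 hsub ha hb ⊢
  exact ⟨C, hC, 1, one_pos, fun x hx _ => stmt13_general (by simp) (aPlus_mul_one_sub hμ.le).ge
    (aMinus_mul_one_sub hμ.le).ge hρ hC.le hC2 hsub
    (fun y hy hyρ => ha y hy.1 hyρ (mem_ball_zero_iff.1 hy.2))
    (by simpa only [finrank_euclideanSpace_fin, halfBall] using hb) x hx⟩
end

section
/- Let n ≥ 2, −∞ < μ < 1/4 and 1 < p < p_KO, where p_KO := +∞ if 0 ≤ μ < 1/4 and p_KO := 1 − 2/α₋ if μ < 0. Then there exist constants 0 < c₁ < c₂ and a separable solution u(x) = |x|^{−2/(p−1)} v(x₁/|x|) of −Δu − (μ/x₁²)u + u^p = 0 in ℝⁿ₊, where v is a positive function on (0,1], twice continuously differentiable on (0,1), solving the angular equation (1−t²)v'' − (n−1)t v' + (μ/t²)v + Λ(−2/(p−1))v = v^p on (0,1), and satisfying c₁ t^{α₋} < v(t) < c₂ t^{α₋} for all t ∈ (0,1]. -/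
/-!
Substituting `v t = t ^ α₋ * w (1 - t²)` and `r = 1 - t²` turns the angular equation into a singular
Sturm–Liouville system `w' = k P`, `P' = ρ f(r, w)` on `(0, 1)` whose flux `P` vanishes at `r = 0`,
the symmetry axis. A flux equal to zero at `r = 0` makes the initial value problem a Volterra
equation. Truncate the source at `0` and at a supersolution `g`, so that it has a Lipschitz bound
`L r`; when `p < p_KO`, `∫ k ∫ ρ L < ∞` up to `r = 1`, and the equation is solvable in `C[0, 1]`.
Shooting in `w 0` reaches `w 1 = g 1`, and the maximum principle gives `0 < w ≤ g`, so the
truncation is inactive. Continuity and positivity of `w` on `[0, 1]` are the two-sided bound on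
`v`. Since `P = r ^ b J`, `b = (n - 1) / 2`, with `J` as smooth as the source, `w` is smooth up to
`r = 0`, so `u x = |x| ^ γ v (x₁ / |x|)` is smooth across the axis, where the equation holds by
continuity.
-/

open Real Set

open MeasureTheory Filter Topology

lemma abs_sub_le_sub_of_abs_deriv_le {f g f' g' : ℝ → ℝ} {a b : ℝ} (hab : a ≤ b)
    (hf : ContinuousOn f (Icc a b)) (hg : ContinuousOn g (Icc a b))
    (hf' : ∀ x ∈ Ioo a b, HasDerivAt f (f' x) x) (hg' : ∀ x ∈ Ioo a b, HasDerivAt g (g' x) x)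
    (h : ∀ x ∈ Ioo a b, |f' x| ≤ g' x) : |f b - f a| ≤ g b - g a := by
  have key : ∀ σ : ℝ, |σ| = 1 → g a - σ * f a ≤ g b - σ * f b := fun σ hσ => by
    refine monotoneOn_of_hasDerivWithinAt_nonneg (convex_Icc a b) (f := fun x => g x - σ * f x)
      (f' := fun x => g' x - σ * f' x) (by fun_prop) ?_ ?_ (left_mem_Icc.2 hab)
      (right_mem_Icc.2 hab) hab <;> rw [interior_Icc]
    · exact fun x hx => ((hg' x hx).sub ((hf' x hx).const_mul σ)).hasDerivWithinAt
    · intro x hx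
      have hle : σ * f' x ≤ |f' x| := by
        simpa only [abs_mul, hσ, one_mul] using le_abs_self (σ * f' x)
      linarith [h x hx]
  rw [abs_le]
  constructor <;> linarith [key 1 abs_one, key (-1) (by norm_num)]

section FluxSystem

variable {k ρ f g w w' P Q : ℝ → ℝ} {a b : ℝ}

/-- `w` and its flux `P` solve the Sturm–Liouville equation `(w' / k)' = ρ f` on `(a, b)`, written
as the first-order system `w' = k P`, `P' = ρ f`. The weights may be singular at both endpoints:
`w` is continuous up to both, the flux `P` only up to the left one. -/
structure IsFluxSolution (k ρ : ℝ → ℝ) (a b : ℝ) (f w P : ℝ → ℝ) : Prop where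
  continuousOn : ContinuousOn w (Icc a b)
  continuousOn_flux : ContinuousOn P (Ico a b)
  hasDerivAt : ∀ r ∈ Ioo a b, HasDerivAt w (k r * P r) r
  hasDerivAt_flux : ∀ r ∈ Ioo a b, HasDerivAt P (ρ r * f r) r

lemma isFluxSolution_const (hf : ∀ r ∈ Ioo a b, f r = 0) (c : ℝ) :
    IsFluxSolution k ρ a b f (fun _ => c) fun _ => 0 where
  continuousOn := continuousOn_const
  continuousOn_flux := continuousOn_const
  hasDerivAt r _ := by simpa only [mul_zero] using hasDerivAt_const r c
  hasDerivAt_flux r hr := by simpa only [hf r hr, mul_zero] using hasDerivAt_const r (0 : ℝ)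

namespace IsFluxSolution

lemma const_mul (hw : IsFluxSolution k ρ a b f w P) (c : ℝ) :
    IsFluxSolution k ρ a b (fun r => c * f r) (fun r => c * w r) fun r => c * P r where
  continuousOn := continuousOn_const.mul hw.continuousOn
  continuousOn_flux := continuousOn_const.mul hw.continuousOn_flux
  hasDerivAt r hr := by simpa only [mul_left_comm] using (hw.hasDerivAt r hr).const_mul c
  hasDerivAt_flux r hr := by simpa only [mul_left_comm] using (hw.hasDerivAt_flux r hr).const_mul c

lemma sub (hw : IsFluxSolution k ρ a b f w P) (hw' : IsFluxSolution k ρ a b g w' Q) :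
    IsFluxSolution k ρ a b (fun r => f r - g r) (fun r => w r - w' r) fun r => P r - Q r where
  continuousOn := hw.continuousOn.sub hw'.continuousOn
  continuousOn_flux := hw.continuousOn_flux.sub hw'.continuousOn_flux
  hasDerivAt r hr := by
    simpa only [mul_sub] using (hw.hasDerivAt r hr).fun_sub (hw'.hasDerivAt r hr)
  hasDerivAt_flux r hr := by
    simpa only [mul_sub] using (hw.hasDerivAt_flux r hr).fun_sub (hw'.hasDerivAt_flux r hr)

lemma mono (hw : IsFluxSolution k ρ a b f w P) {y : ℝ} (hy : a ≤ y) :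
    IsFluxSolution k ρ y b f w P where
  continuousOn := hw.continuousOn.mono (Icc_subset_Icc_left hy)
  continuousOn_flux := hw.continuousOn_flux.mono (Ico_subset_Ico_left hy)
  hasDerivAt r hr := hw.hasDerivAt r (Ioo_subset_Ioo_left hy hr)
  hasDerivAt_flux r hr := hw.hasDerivAt_flux r (Ioo_subset_Ioo_left hy hr)

lemma congr (hw : IsFluxSolution k ρ a b f w P) (h : EqOn f g (Ioo a b)) :
    IsFluxSolution k ρ a b g w P where
  __ := hw
  hasDerivAt_flux r hr := h hr ▸ hw.hasDerivAt_flux r hr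

lemma flux_eq_zero_of_isLocalExtr (hw : IsFluxSolution k ρ a b f w P)
    (hk : ∀ r ∈ Ioo a b, 0 < k r) {m : ℝ} (hm : m ∈ Ioo a b) (hext : IsLocalExtr w m) :
    P m = 0 :=
  (mul_eq_zero.1 (hext.hasDerivAt_eq_zero (hw.hasDerivAt m hm))).resolve_left (hk m hm).ne'

lemma exists_gt_of_flux_nonneg (hw : IsFluxSolution k ρ a b f w P) (hk : ∀ r ∈ Ioo a b, 0 < k r)
    (hρ : ∀ r ∈ Ioo a b, 0 < ρ r) (hf : ContinuousOn f (Ico a b)) {y : ℝ} (hy : y ∈ Ico a b)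
    (hPy : 0 ≤ P y) (hfy : 0 < f y) : ∃ z ∈ Ioo y b, w y < w z := by
  obtain ⟨z, ⟨hyz, hzb⟩, hfz⟩ : ∃ z ∈ Ioo y b, ∀ r ∈ Ioo y z, 0 < f r := by
    have hev : ∀ᶠ r in 𝓝[>] y, 0 < f r :=
      ((hf.mono (Ico_subset_Ico_left hy.1) y (left_mem_Ico.2 hy.2)).mono_of_mem_nhdsWithin
        (Ico_mem_nhdsGT hy.2)).eventually_const_lt hfy
    obtain ⟨z, hyz, hz⟩ := (mem_nhdsGT_iff_exists_mem_Ioc_Ioo_subset hy.2).1 hev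
    obtain ⟨z', hyz', hz'⟩ := exists_between hyz.1
    exact ⟨z', ⟨hyz', hz'.trans_le hyz.2⟩, fun r hr => hz ⟨hr.1, hr.2.trans hz'⟩⟩
  have hsub : ∀ r ∈ Ioo y z, r ∈ Ioo a b := fun r hr =>
    ⟨hy.1.trans_lt hr.1, hr.2.trans hzb⟩
  have hP : StrictMonoOn P (Icc y z) := by
    refine strictMonoOn_of_hasDerivWithinAt_pos (convex_Icc y z) (f' := fun r => ρ r * f r)
      (hw.continuousOn_flux.mono fun r hr => ⟨hy.1.trans hr.1, hr.2.trans_lt hzb⟩) ?_ ?_ <;>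
      rw [interior_Icc]
    · exact fun r hr => (hw.hasDerivAt_flux r (hsub r hr)).hasDerivWithinAt
    · exact fun r hr => mul_pos (hρ r (hsub r hr)) (hfz r hr)
  have hmono : StrictMonoOn w (Icc y z) := by
    refine strictMonoOn_of_hasDerivWithinAt_pos (convex_Icc y z) (f' := fun r => k r * P r)
      (hw.continuousOn.mono (Icc_subset_Icc hy.1 hzb.le)) ?_ ?_ <;> rw [interior_Icc]
    · exact fun r hr => (hw.hasDerivAt r (hsub r hr)).hasDerivWithinAt
    · exact fun r hr => mul_pos (hk r (hsub r hr)) <| hPy.trans_lt <|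
        hP (left_mem_Icc.2 hyz.le) (Ioo_subset_Icc_self hr) hr.1
  exact ⟨z, ⟨hyz, hzb⟩, hmono (left_mem_Icc.2 hyz.le) (right_mem_Icc.2 hyz.le) hyz⟩

theorem lt_right_of_forall_pos (hw : IsFluxSolution k ρ a b f w P) (hk : ∀ r ∈ Ioo a b, 0 < k r)
    (hρ : ∀ r ∈ Ioo a b, 0 < ρ r) (hf : ContinuousOn f (Ico a b)) (hPa : 0 ≤ P a)
    (hpos : ∀ r ∈ Ico a b, 0 ≤ w r → 0 < f r) {r : ℝ} (hr : r ∈ Ico a b) (hwr : 0 ≤ w r) :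
    w r < w b := by
  by_contra! hle
  obtain ⟨m, hm, hmax⟩ : ∃ m ∈ Ico a b, IsMaxOn w (Icc a b) m := by
    obtain ⟨m, hm, hmax⟩ := isCompact_Icc.exists_isMaxOn
      (nonempty_Icc.2 (hr.1.trans hr.2.le)) hw.continuousOn
    rcases hm.2.lt_or_eq with hmb | rfl
    · exact ⟨m, ⟨hm.1, hmb⟩, hmax⟩
    · exact ⟨r, hr, fun z hz => (hmax hz).trans hle⟩
  have hPm : 0 ≤ P m := by
    rcases hm.1.eq_or_lt with rfl | ham
    · exact hPa
    · exact (hw.flux_eq_zero_of_isLocalExtr hk ⟨ham, hm.2⟩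
        (.inr (hmax.isLocalMax (Icc_mem_nhds ham hm.2)))).ge
  obtain ⟨z, hz, hlt⟩ := hw.exists_gt_of_flux_nonneg hk hρ hf hm hPm
    (hpos m hm (hwr.trans (hmax ⟨hr.1, hr.2.le⟩)))
  exact hlt.not_ge (hmax ⟨hm.1.trans hz.1.le, hz.2.le⟩)

end IsFluxSolution

end FluxSystem

section Potential

variable {k ρ L f : ℝ → ℝ} {a b C : ℝ}

lemma continuousOn_primitive_Ico (hf : ∀ z ∈ Ico a b, IntervalIntegrable f volume a z) :
    ContinuousOn (fun z => ∫ r in a..z, f r) (Ico a b) := by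
  intro z hz
  obtain ⟨z', hzz', hz'b⟩ := exists_between hz.2
  have haz' : a ≤ z' := hz.1.trans hzz'.le
  have hcont := intervalIntegral.continuousOn_primitive_interval' (hf z' ⟨haz', hz'b⟩)
    left_mem_uIcc
  rw [uIcc_of_le haz'] at hcont
  refine (hcont z ⟨hz.1, hzz'.le⟩).mono_of_mem_nhdsWithin ?_
  filter_upwards [self_mem_nhdsWithin, mem_nhdsWithin_of_mem_nhds (Iio_mem_nhds hzz')]
    with r hr hr' using ⟨hr.1, hr'.le⟩

/-- The flux `∫ₐᶻ ρ f` generated by a source `f` from zero flux at `a`. -/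
noncomputable def flux (ρ : ℝ → ℝ) (a : ℝ) (f : ℝ → ℝ) (z : ℝ) : ℝ := ∫ r in a..z, ρ r * f r

/-- The solution `∫ₐʸ k(z) ∫ₐᶻ ρ f dr dz` of `(w' / k)' = ρ f` with `w(a) = 0` and zero flux
at `a`. -/
noncomputable def potential (k ρ : ℝ → ℝ) (a : ℝ) (f : ℝ → ℝ) (y : ℝ) : ℝ :=
  ∫ z in a..y, k z * flux ρ a f z

/-- Positive weights `k`, `ρ` on `(a, b)`, possibly singular at both endpoints, for which a source
of size `L` has a potential that is continuous on `[a, b]`. -/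
structure AdmissibleWeights (a b : ℝ) (k ρ L : ℝ → ℝ) : Prop where
  lt : a < b
  continuousOn_k : ContinuousOn k (Ioo a b)
  continuousOn_ρ : ContinuousOn ρ (Ioo a b)
  continuousOn_L : ContinuousOn L (Ioo a b)
  k_pos : ∀ r ∈ Ioo a b, 0 < k r
  ρ_pos : ∀ r ∈ Ioo a b, 0 < ρ r
  L_nonneg : ∀ r ∈ Ioo a b, 0 ≤ L r
  intervalIntegrable_source : ∀ z ∈ Ico a b, IntervalIntegrable (fun r => ρ r * L r) volume a z
  intervalIntegrable_flux : IntervalIntegrable (fun z => k z * flux ρ a L z) volume a b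

namespace AdmissibleWeights

lemma intervalIntegrable_source_of_le (h : AdmissibleWeights a b k ρ L)
    (hf : ContinuousOn f (Ioo a b)) (hfL : ∀ r ∈ Ioo a b, |f r| ≤ C * L r) {z : ℝ}
    (hz : z ∈ Ico a b) : IntervalIntegrable (fun r => ρ r * f r) volume a z := by
  refine ((h.intervalIntegrable_source z hz).const_mul C).mono_fun' ?_ ?_ <;>
    rw [uIoc_of_le hz.1]
  · exact ((h.continuousOn_ρ.mul hf).mono fun r hr =>
      ⟨hr.1, hr.2.trans_lt hz.2⟩).aestronglyMeasurable measurableSet_Ioc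
  · filter_upwards [ae_restrict_mem measurableSet_Ioc] with r hr
    have hr' : r ∈ Ioo a b := ⟨hr.1, hr.2.trans_lt hz.2⟩
    rw [norm_eq_abs, abs_mul, abs_of_pos (h.ρ_pos r hr')]
    linarith [mul_le_mul_of_nonneg_left (hfL r hr') (h.ρ_pos r hr').le]

lemma abs_flux_le (h : AdmissibleWeights a b k ρ L) (hfL : ∀ r ∈ Ioo a b, |f r| ≤ C * L r) {z : ℝ}
    (hz : z ∈ Ico a b) : |flux ρ a f z| ≤ C * flux ρ a L z := by
  rw [flux, flux, ← intervalIntegral.integral_const_mul, ← norm_eq_abs]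
  refine intervalIntegral.norm_integral_le_of_norm_le hz.1 (ae_of_all _ fun r hr => ?_)
    ((h.intervalIntegrable_source z hz).const_mul C)
  have hr' : r ∈ Ioo a b := ⟨hr.1, hr.2.trans_lt hz.2⟩
  rw [norm_eq_abs, abs_mul, abs_of_pos (h.ρ_pos r hr')]
  linarith [mul_le_mul_of_nonneg_left (hfL r hr') (h.ρ_pos r hr').le]

lemma hasDerivAt_flux (h : AdmissibleWeights a b k ρ L) (hf : ContinuousOn f (Ioo a b))
    (hfL : ∀ r ∈ Ioo a b, |f r| ≤ C * L r) {r : ℝ} (hr : r ∈ Ioo a b) :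
    HasDerivAt (flux ρ a f) (ρ r * f r) r :=
  have hρf := h.continuousOn_ρ.mul hf
  intervalIntegral.integral_hasDerivAt_right
    (h.intervalIntegrable_source_of_le hf hfL (Ioo_subset_Ico_self hr))
    (hρf.stronglyMeasurableAtFilter isOpen_Ioo r hr) (hρf.continuousAt (isOpen_Ioo.mem_nhds hr))

lemma continuousOn_flux (h : AdmissibleWeights a b k ρ L) (hf : ContinuousOn f (Ioo a b))
    (hfL : ∀ r ∈ Ioo a b, |f r| ≤ C * L r) : ContinuousOn (flux ρ a f) (Ico a b) :=
  continuousOn_primitive_Ico fun _ => h.intervalIntegrable_source_of_le hf hfL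

lemma intervalIntegrable_flux_of_le (h : AdmissibleWeights a b k ρ L)
    (hf : ContinuousOn f (Ioo a b)) (hfL : ∀ r ∈ Ioo a b, |f r| ≤ C * L r) :
    IntervalIntegrable (fun z => k z * flux ρ a f z) volume a b := by
  refine (h.intervalIntegrable_flux.const_mul C).mono_fun' ?_ ?_ <;>
    rw [uIoc_of_le h.lt.le, ← restrict_Ioo_eq_restrict_Ioc]
  · exact (h.continuousOn_k.mul ((h.continuousOn_flux hf hfL).mono
      Ioo_subset_Ico_self)).aestronglyMeasurable measurableSet_Ioo
  · filter_upwards [ae_restrict_mem measurableSet_Ioo] with r hr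
    rw [norm_eq_abs, abs_mul, abs_of_pos (h.k_pos r hr)]
    linarith [mul_le_mul_of_nonneg_left (h.abs_flux_le hfL (Ioo_subset_Ico_self hr))
      (h.k_pos r hr).le]

lemma isFluxSolution_potential (h : AdmissibleWeights a b k ρ L) (hf : ContinuousOn f (Ioo a b))
    (hfL : ∀ r ∈ Ioo a b, |f r| ≤ C * L r) (w₀ : ℝ) :
    IsFluxSolution k ρ a b f (fun y => w₀ + potential k ρ a f y) (flux ρ a f) where
  continuousOn := by
    rw [← uIcc_of_le h.lt.le]
    exact continuousOn_const.add (intervalIntegral.continuousOn_primitive_interval'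
      (h.intervalIntegrable_flux_of_le hf hfL) left_mem_uIcc)
  continuousOn_flux := h.continuousOn_flux hf hfL
  hasDerivAt r hr := by
    have hkP := h.continuousOn_k.mul ((h.continuousOn_flux hf hfL).mono Ioo_subset_Ico_self)
    have hint := (h.intervalIntegrable_flux_of_le hf hfL).mono_set (c := a) (d := r) <| by
      rw [uIcc_of_le h.lt.le, uIcc_of_le hr.1.le]
      exact Icc_subset_Icc_right hr.2.le
    exact (intervalIntegral.integral_hasDerivAt_right hint
      (hkP.stronglyMeasurableAtFilter isOpen_Ioo r hr)
      (hkP.continuousAt (isOpen_Ioo.mem_nhds hr))).const_add w₀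
  hasDerivAt_flux _ hr := h.hasDerivAt_flux hf hfL hr

lemma abs_L_le (h : AdmissibleWeights a b k ρ L) : ∀ r ∈ Ioo a b, |L r| ≤ 1 * L r := fun r hr => by
  rw [abs_of_nonneg (h.L_nonneg r hr), one_mul]

lemma isFluxSolution_gauge (h : AdmissibleWeights a b k ρ L) :
    IsFluxSolution k ρ a b L (potential k ρ a L) (flux ρ a L) := by
  simpa only [zero_add] using h.isFluxSolution_potential h.continuousOn_L h.abs_L_le 0

lemma flux_nonneg (h : AdmissibleWeights a b k ρ L) {z : ℝ} (hz : z ∈ Ico a b) :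
    0 ≤ flux ρ a L z := by
  simpa only [one_mul] using (abs_nonneg _).trans (h.abs_flux_le h.abs_L_le hz)

lemma monotoneOn_gauge (h : AdmissibleWeights a b k ρ L) :
    MonotoneOn (potential k ρ a L) (Icc a b) := by
  refine monotoneOn_of_hasDerivWithinAt_nonneg (convex_Icc a b)
    (f' := fun r => k r * flux ρ a L r) h.isFluxSolution_gauge.continuousOn ?_ ?_ <;>
    rw [interior_Icc]
  · exact fun r hr => (h.isFluxSolution_gauge.hasDerivAt r hr).hasDerivWithinAt
  · exact fun r hr => mul_nonneg (h.k_pos r hr).le (h.flux_nonneg (Ioo_subset_Ico_self hr))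

lemma gauge_nonneg (h : AdmissibleWeights a b k ρ L) {r : ℝ} (hr : r ∈ Icc a b) :
    0 ≤ potential k ρ a L r := by
  simpa only [potential, intervalIntegral.integral_same] using
    h.monotoneOn_gauge (left_mem_Icc.2 h.lt.le) hr hr.1

end AdmissibleWeights

end Potential

section Gronwall

variable {k ρ L f w P : ℝ → ℝ} {a b D : ℝ}

namespace AdmissibleWeights

variable {y₀ : ℝ}

lemma abs_flux_le_of_abs_source_le (h : AdmissibleWeights a b k ρ L) (hy₀ : y₀ ∈ Ico a b)
    (hD : 0 ≤ D) (hw : IsFluxSolution k ρ y₀ b f w P) (hP₀ : P y₀ = 0)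
    (hf : ∀ r ∈ Ioo y₀ b, |f r| ≤ L r * (D * exp (2 * potential k ρ a L r))) {z : ℝ}
    (hz : z ∈ Ico y₀ b) : |P z| ≤ D * exp (2 * potential k ρ a L z) * flux ρ a L z := by
  set E := D * exp (2 * potential k ρ a L z)
  have hsub : ∀ r ∈ Ioo y₀ z, r ∈ Ioo a b := fun r hr =>
    ⟨hy₀.1.trans_lt hr.1, hr.2.trans hz.2⟩
  have hle : |P z - P y₀| ≤ E * flux ρ a L z - E * flux ρ a L y₀ := by
    refine abs_sub_le_sub_of_abs_deriv_le (g := fun r => E * flux ρ a L r)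
      (g' := fun r => E * (ρ r * L r)) hz.1
      (hw.continuousOn_flux.mono (Icc_subset_Ico_right hz.2))
      (continuousOn_const.mul (h.isFluxSolution_gauge.continuousOn_flux.mono
        fun r hr => ⟨hy₀.1.trans hr.1, hr.2.trans_lt hz.2⟩))
      (fun r hr => hw.hasDerivAt_flux r ⟨hr.1, hr.2.trans hz.2⟩)
      (fun r hr => (h.isFluxSolution_gauge.hasDerivAt_flux r (hsub r hr)).const_mul E)
      fun r hr => ?_
    have hr' := hsub r hr
    have hE : D * exp (2 * potential k ρ a L r) ≤ E :=
      mul_le_mul_of_nonneg_left (exp_le_exp.2 (mul_le_mul_of_nonneg_left (h.monotoneOn_gauge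
        (Ioo_subset_Icc_self hr') ⟨hy₀.1.trans hz.1, hz.2.le⟩ hr.2.le) zero_le_two)) hD
    calc |ρ r * f r| = ρ r * |f r| := by rw [abs_mul, abs_of_pos (h.ρ_pos r hr')]
      _ ≤ ρ r * (L r * E) := mul_le_mul_of_nonneg_left ((hf r ⟨hr.1, hr'.2⟩).trans
          (mul_le_mul_of_nonneg_left hE (h.L_nonneg r hr'))) (h.ρ_pos r hr').le
      _ = E * (ρ r * L r) := by ring
  rw [hP₀, sub_zero] at hle
  linarith [mul_nonneg (show 0 ≤ E by positivity) (h.flux_nonneg hy₀)]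

lemma abs_sub_le_of_abs_source_le (h : AdmissibleWeights a b k ρ L) (hy₀ : y₀ ∈ Ico a b)
    (hD : 0 ≤ D) (hw : IsFluxSolution k ρ y₀ b f w P) (hP₀ : P y₀ = 0)
    (hf : ∀ r ∈ Ioo y₀ b, |f r| ≤ L r * (D * exp (2 * potential k ρ a L r))) {y : ℝ}
    (hy : y ∈ Icc y₀ b) : |w y - w y₀| ≤ D / 2 * exp (2 * potential k ρ a L y) := by
  have hsub : ∀ r ∈ Ioo y₀ y, r ∈ Ioo a b := fun r hr =>
    ⟨hy₀.1.trans_lt hr.1, hr.2.trans_le hy.2⟩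
  have hgauge := h.isFluxSolution_gauge
  have hcont : ContinuousOn (potential k ρ a L) (Icc y₀ y) :=
    hgauge.continuousOn.mono (Icc_subset_Icc hy₀.1 hy.2)
  have hle := abs_sub_le_sub_of_abs_deriv_le
    (g := fun r => D / 2 * exp (2 * potential k ρ a L r)) hy.1
    (hw.continuousOn.mono (Icc_subset_Icc_right hy.2)) (by fun_prop)
    (fun r hr => hw.hasDerivAt r ⟨hr.1, hr.2.trans_le hy.2⟩)
    (fun r hr => (((hgauge.hasDerivAt r (hsub r hr)).const_mul 2).exp).const_mul (D / 2))
    fun r hr => by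
      have hr' := hsub r hr
      rw [abs_mul, abs_of_pos (h.k_pos r hr')]
      have hP := h.abs_flux_le_of_abs_source_le hy₀ hD hw hP₀ hf ⟨hr.1.le, hr'.2⟩
      linarith [mul_le_mul_of_nonneg_left hP (h.k_pos r hr').le]
  linarith [show 0 ≤ D / 2 * exp (2 * potential k ρ a L y₀) by positivity]

theorem abs_le_of_abs_source_le (h : AdmissibleWeights a b k ρ L) (hy₀ : y₀ ∈ Ico a b)
    (hw : IsFluxSolution k ρ y₀ b f w P) (hP₀ : P y₀ = 0)
    (hf : ∀ r ∈ Ioo y₀ b, |f r| ≤ L r * |w r|) {y : ℝ} (hy : y ∈ Icc y₀ b) :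
    |w y| ≤ 2 * |w y₀| * exp (2 * potential k ρ a L y) := by
  have hcont : ContinuousOn (potential k ρ a L) (Icc y₀ b) :=
    h.isFluxSolution_gauge.continuousOn.mono (Icc_subset_Icc_left hy₀.1)
  have hwcont := hw.continuousOn
  obtain ⟨m, hm, hmax⟩ := isCompact_Icc.exists_isMaxOn (nonempty_Icc.2 hy₀.2.le)
    (f := fun r => |w r| / exp (2 * potential k ρ a L r))
    (hwcont.abs.div (by fun_prop) fun _ _ => (exp_pos _).ne')
  obtain ⟨D, hD⟩ : ∃ D, D = |w m| / exp (2 * potential k ρ a L m) := ⟨_, rfl⟩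
  have hD₀ : 0 ≤ D := hD ▸ by positivity
  have hbound : ∀ r ∈ Icc y₀ b, |w r| ≤ D * exp (2 * potential k ρ a L r) := fun r hr =>
    (div_le_iff₀ (exp_pos _)).1 (hD ▸ hmax hr)
  have hD_le : D ≤ 2 * |w y₀| := by
    have hgrowth := h.abs_sub_le_of_abs_source_le hy₀ hD₀ hw hP₀ (fun r hr => (hf r hr).trans
      (mul_le_mul_of_nonneg_left (hbound r (Ioo_subset_Icc_self hr))
        (h.L_nonneg r ⟨hy₀.1.trans_lt hr.1, hr.2⟩))) hm
    have hexp : 1 ≤ exp (2 * potential k ρ a L m) :=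
      one_le_exp (by linarith [h.gauge_nonneg ⟨hy₀.1.trans hm.1, hm.2⟩])
    have hwm : |w m| = D * exp (2 * potential k ρ a L m) := by
      rw [hD, div_mul_cancel₀ _ (exp_pos _).ne']
    have htri := abs_sub_abs_le_abs_sub (w m) (w y₀)
    nlinarith [abs_nonneg (w y₀)]
  exact (hbound y hy).trans (by gcongr)

end AdmissibleWeights

end Gronwall

section Existence

variable {a b : ℝ}

-- Banach's fixed point theorem in Bielecki's weighted norm `sup |w| exp (-Φ)`.
lemma exists_eqOn_of_exp_weighted_contraction {Φ : ℝ → ℝ} {T : (ℝ → ℝ) → ℝ → ℝ} {K : NNReal}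
    (hab : a ≤ b) (hK : K < 1) (hΦ : ContinuousOn Φ (Icc a b))
    (hT : ∀ w, ContinuousOn w (Icc a b) → ContinuousOn (T w) (Icc a b))
    (hlip : ∀ w w' D, ContinuousOn w (Icc a b) → ContinuousOn w' (Icc a b) → 0 ≤ D →
      (∀ y ∈ Icc a b, |w y - w' y| ≤ D * exp (Φ y)) →
      ∀ y ∈ Icc a b, |T w y - T w' y| ≤ K * D * exp (Φ y)) :
    ∃ w, ContinuousOn w (Icc a b) ∧ EqOn (T w) w (Icc a b) := by
  let unweight (Z : C(Icc a b, ℝ)) (y : ℝ) : ℝ := IccExtend hab Z y * exp (Φ y)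
  have hcont (Z) : ContinuousOn (unweight Z) (Icc a b) :=
    (Z.continuous.Icc_extend'.continuousOn).mul hΦ.rexp
  let S (Z : C(Icc a b, ℝ)) : C(Icc a b, ℝ) :=
    { toFun := (Icc a b).domRestrict fun y => T (unweight Z) y * exp (-Φ y)
      continuous_toFun := continuousOn_iff_continuous_domRestrict.1
        ((hT _ (hcont Z)).mul hΦ.neg.rexp) }
  have hS_apply (Z y) : S Z y = T (unweight Z) y * exp (-Φ y) := rfl
  have hS : ContractingWith K S := by
    refine ⟨hK, LipschitzWith.of_dist_le_mul fun Z Z' => ?_⟩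
    rw [ContinuousMap.dist_le (by positivity)]
    intro y
    have hdist : ∀ r ∈ Icc a b, |unweight Z r - unweight Z' r| ≤ dist Z Z' * exp (Φ r) := by
      intro r _
      rw [← sub_mul, abs_mul, abs_exp]
      exact mul_le_mul_of_nonneg_right (ContinuousMap.dist_apply_le_dist (f := Z) (g := Z') _)
        (exp_pos _).le
    calc dist (S Z y) (S Z' y) = |T (unweight Z) y - T (unweight Z') y| * exp (-Φ y) := by
          rw [hS_apply, hS_apply, Real.dist_eq, ← sub_mul, abs_mul, abs_exp]
      _ ≤ K * dist Z Z' * exp (Φ y) * exp (-Φ y) := by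
          gcongr
          exact hlip _ _ _ (hcont Z) (hcont Z') dist_nonneg hdist y y.2
      _ = K * dist Z Z' := by rw [mul_assoc, ← exp_add, add_neg_cancel, exp_zero, mul_one]
  obtain ⟨Z, hZ⟩ : ∃ Z, S Z = Z := ⟨_, hS.fixedPoint_isFixedPt⟩
  refine ⟨unweight Z, hcont Z, fun y hy => ?_⟩
  have hZy : T (unweight Z) y * exp (-Φ y) = Z ⟨y, hy⟩ := congrArg (fun g => g ⟨y, hy⟩) hZ
  simp only [unweight]
  rw [IccExtend_of_mem _ _ hy, ← hZy, mul_assoc, ← exp_add, neg_add_cancel, exp_zero, mul_one]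

theorem AdmissibleWeights.exists_isFluxSolution {k ρ L : ℝ → ℝ} {F : ℝ → ℝ → ℝ}
    (h : AdmissibleWeights a b k ρ L)
    (hF : ContinuousOn (Function.uncurry F) (Ico a b ×ˢ univ)) (hF₀ : ∀ r ∈ Ioo a b, F r 0 = 0)
    (hlip : ∀ r ∈ Ioo a b, ∀ w w', |F r w - F r w'| ≤ L r * |w - w'|) (w₀ : ℝ) :
    ∃ w P, IsFluxSolution k ρ a b (fun r => F r (w r)) w P ∧ w a = w₀ ∧ P a = 0 := by
  have hFcont {w : ℝ → ℝ} (hw : ContinuousOn w (Icc a b)) :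
      ContinuousOn (fun r => F r (w r)) (Ioo a b) :=
    hF.comp (continuousOn_id.prodMk (hw.mono Ioo_subset_Icc_self))
      fun r hr => ⟨Ioo_subset_Ico_self hr, mem_univ _⟩
  have hsol {w : ℝ → ℝ} (hw : ContinuousOn w (Icc a b)) :
      IsFluxSolution k ρ a b (fun r => F r (w r))
        (fun y => w₀ + potential k ρ a (fun r => F r (w r)) y)
        (flux ρ a fun r => F r (w r)) := by
    obtain ⟨C, hC⟩ := isCompact_Icc.exists_bound_of_continuousOn hw
    refine h.isFluxSolution_potential (C := C) (hFcont hw) (fun r hr => ?_) w₀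
    have hle := hlip r hr (w r) 0
    rw [hF₀ r hr, sub_zero, sub_zero] at hle
    have hwC : |w r| ≤ C := hC r (Ioo_subset_Icc_self hr)
    linarith [mul_le_mul_of_nonneg_left hwC (h.L_nonneg r hr)]
  obtain ⟨w, hw, hfix⟩ := exists_eqOn_of_exp_weighted_contraction
    (T := fun w y => w₀ + potential k ρ a (fun r => F r (w r)) y) (K := 1 / 2)
    (Φ := fun y => 2 * potential k ρ a L y) h.lt.le (by norm_num)
    (continuousOn_const.mul h.isFluxSolution_gauge.continuousOn)
    (fun w hw => (hsol hw).continuousOn) fun w w' D hw hw' hD hdist y hy => by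
      have hdiff := h.abs_sub_le_of_abs_source_le (left_mem_Ico.2 h.lt) hD
        ((hsol hw).sub (hsol hw')) (by simp only [flux, intervalIntegral.integral_same, sub_self])
        (fun r hr => (hlip r hr _ _).trans (mul_le_mul_of_nonneg_left
          (hdist r (Ioo_subset_Icc_self hr)) (h.L_nonneg r hr))) hy
      simp only [potential, intervalIntegral.integral_same, sub_self, sub_zero] at hdiff
      exact hdiff.trans_eq (by simp only [potential]; push_cast; ring)
  refine ⟨_, _, (hsol hw).congr fun r hr => ?_, ?_, ?_⟩
  · exact congrArg (F r) (hfix (Ioo_subset_Icc_self hr)).symm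
  · simp only [potential, intervalIntegral.integral_same, add_zero]
  · simp only [flux, intervalIntegral.integral_same]

end Existence

section Shooting

variable {k ρ L w w' P P' g Q S : ℝ → ℝ} {F : ℝ → ℝ → ℝ} {a b : ℝ}

namespace AdmissibleWeights

lemma abs_sub_le_of_lipschitz (h : AdmissibleWeights a b k ρ L)
    (hlip : ∀ r ∈ Ioo a b, ∀ w w', |F r w - F r w'| ≤ L r * |w - w'|) {y₀ : ℝ} (hy₀ : y₀ ∈ Ico a b)
    (hw : IsFluxSolution k ρ y₀ b (fun r => F r (w r)) w P)
    (hw' : IsFluxSolution k ρ y₀ b (fun r => F r (w' r)) w' P') (hP : P y₀ = P' y₀) {y : ℝ}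
    (hy : y ∈ Icc y₀ b) :
    |w y - w' y| ≤ 2 * |w y₀ - w' y₀| * exp (2 * potential k ρ a L y) :=
  h.abs_le_of_abs_source_le hy₀ (hw.sub hw') (sub_eq_zero.2 hP)
    (fun r hr => hlip r ⟨hy₀.1.trans_lt hr.1, hr.2⟩ _ _) hy

theorem exists_isFluxSolution_right_eq (h : AdmissibleWeights a b k ρ L)
    (hF : ContinuousOn (Function.uncurry F) (Ico a b ×ˢ univ)) (hF₀ : ∀ r ∈ Ioo a b, F r 0 = 0)
    (hlip : ∀ r ∈ Ioo a b, ∀ w w', |F r w - F r w'| ≤ L r * |w - w'|)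
    (hw : IsFluxSolution k ρ a b (fun r => F r (w r)) w P) (hP : P a = 0) {β : ℝ}
    (hβ : β ∈ uIcc 0 (w b)) :
    ∃ w P, IsFluxSolution k ρ a b (fun r => F r (w r)) w P ∧ P a = 0 ∧ w b = β := by
  choose W R hW hWa hRa using h.exists_isFluxSolution hF hF₀ hlip
  set E := exp (2 * potential k ρ a L b)
  have hdist {w w' P P' : ℝ → ℝ} (hw : IsFluxSolution k ρ a b (fun r => F r (w r)) w P)
      (hw' : IsFluxSolution k ρ a b (fun r => F r (w' r)) w' P') (hP : P a = P' a) :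
      |w b - w' b| ≤ 2 * |w a - w' a| * E :=
    h.abs_sub_le_of_lipschitz hlip (left_mem_Ico.2 h.lt) hw hw' hP (right_mem_Icc.2 h.lt.le)
  have heq {w w' P P' : ℝ → ℝ} (hw : IsFluxSolution k ρ a b (fun r => F r (w r)) w P)
      (hw' : IsFluxSolution k ρ a b (fun r => F r (w' r)) w' P') (hP : P a = P' a)
      (hwa : w a = w' a) : w b = w' b := by
    simpa only [hwa, sub_self, abs_zero, mul_zero, zero_mul, abs_nonpos_iff, sub_eq_zero]
      using hdist hw hw' hP
  have hcont : Continuous fun w₀ => W w₀ b := by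
    refine (LipschitzWith.of_dist_le_mul (K := (2 * E).toNNReal) fun w₀ w₁ => ?_).continuous
    rw [Real.dist_eq, Real.dist_eq, Real.coe_toNNReal _ (by positivity)]
    have hle := hdist (hW w₀) (hW w₁) ((hRa w₀).trans (hRa w₁).symm)
    rw [hWa, hWa] at hle
    linarith
  have hzero : IsFluxSolution k ρ a b (fun r => F r 0) (fun _ => 0) fun _ => 0 :=
    isFluxSolution_const hF₀ 0
  rw [← heq (hW 0) hzero (hRa 0) (hWa 0), ← heq (hW (w a)) hw ((hRa _).trans hP.symm) (hWa _)] at hβ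
  obtain ⟨w₀, -, hw₀⟩ := intermediate_value_uIcc hcont.continuousOn hβ
  exact ⟨W w₀, R w₀, hW w₀, hRa w₀, hw₀⟩

theorem pos_of_right_pos (h : AdmissibleWeights a b k ρ L)
    (hF₀ : ∀ r ∈ Ioo a b, ∀ w ≤ 0, F r w = 0)
    (hlip : ∀ r ∈ Ioo a b, ∀ w w', |F r w - F r w'| ≤ L r * |w - w'|)
    (hw : IsFluxSolution k ρ a b (fun r => F r (w r)) w P) (hP : P a = 0) (hwb : 0 < w b) :
    ∀ y ∈ Icc a b, 0 < w y := by
  obtain ⟨m, hm, hmin⟩ := isCompact_Icc.exists_isMinOn (nonempty_Icc.2 h.lt.le) hw.continuousOn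
  suffices hwm : 0 < w m from fun y hy => hwm.trans_le (hmin hy)
  by_contra! hwm
  have hmb : m < b := hm.2.lt_of_ne fun hmb => (hmb ▸ hwm).not_gt hwb
  have hPm : P m = 0 := by
    rcases hm.1.eq_or_lt with rfl | ham
    · exact hP
    · exact hw.flux_eq_zero_of_isLocalExtr h.k_pos ⟨ham, hmb⟩
        (.inl (hmin.isLocalMin (Icc_mem_nhds ham hmb)))
  have hconst : IsFluxSolution k ρ m b (fun r => F r (w m)) (fun _ => w m) fun _ => 0 :=
    isFluxSolution_const (fun r hr => hF₀ r ⟨hm.1.trans_lt hr.1, hr.2⟩ _ hwm) (w m)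
  have hle := h.abs_sub_le_of_lipschitz hlip ⟨hm.1, hmb⟩ (hw.mono hm.1) hconst hPm
    (right_mem_Icc.2 hmb.le)
  rw [sub_self, abs_zero, mul_zero, zero_mul, abs_nonpos_iff, sub_eq_zero] at hle
  exact (hle ▸ hwm).not_gt hwb

end AdmissibleWeights

/-- The reaction term `F r` frozen outside `[0, g r]`, which makes it globally Lipschitz. -/
def truncate (F : ℝ → ℝ → ℝ) (g : ℝ → ℝ) (r w : ℝ) : ℝ := F r (max (min w (g r)) 0)

lemma truncate_of_nonpos {r v : ℝ} (hF : F r 0 = 0) (hv : v ≤ 0) : truncate F g r v = 0 := by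
  rw [truncate, max_eq_right ((min_le_left _ _).trans hv), hF]

lemma truncate_of_mem_Icc {r v : ℝ} (hv : v ∈ Icc 0 (g r)) : truncate F g r v = F r v := by
  rw [truncate, min_eq_left hv.2, max_eq_left hv.1]

lemma truncate_of_ge {r v : ℝ} (hg : 0 ≤ g r) (hv : g r ≤ v) : truncate F g r v = F r (g r) := by
  rw [truncate, min_eq_right hv, max_eq_left hg]

lemma continuousOn_truncate {s : Set ℝ} (hF : ContinuousOn (Function.uncurry F) (s ×ˢ univ))
    (hg : ContinuousOn g s) : ContinuousOn (Function.uncurry (truncate F g)) (s ×ˢ univ) :=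
  hF.comp (f := fun q : ℝ × ℝ => (q.1, max (min q.2 (g q.1)) 0))
    (continuousOn_fst.prodMk ((continuousOn_snd.inf
      (hg.comp continuousOn_fst fun _ hq => hq.1)).sup continuousOn_const))
    fun _ hq => ⟨hq.1, mem_univ _⟩

lemma abs_truncate_sub_le {r K : ℝ} (hg : 0 ≤ g r) (hK : 0 ≤ K)
    (hlip : ∀ v ∈ Icc 0 (g r), ∀ v' ∈ Icc 0 (g r), |F r v - F r v'| ≤ K * |v - v'|) (v v' : ℝ) :
    |truncate F g r v - truncate F g r v'| ≤ K * |v - v'| := by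
  have hmem (v : ℝ) : max (min v (g r)) 0 ∈ Icc 0 (g r) :=
    ⟨le_max_right _ _, max_le (min_le_right _ _) hg⟩
  exact (hlip _ (hmem v) _ (hmem v')).trans <| mul_le_mul_of_nonneg_left
    ((abs_max_sub_max_le_abs _ _ _).trans (abs_inf_sub_inf_le_abs _ _ _)) hK

-- Shooting in `w a`: from `w a = 0` the solution vanishes, from `w a = g a` it overtakes `g`, so
-- some initial value in between gives `w b = g b`; the maximum principle then keeps `w` below `g`.
theorem AdmissibleWeights.exists_pos_isFluxSolution_of_supersolution
    (h : AdmissibleWeights a b k ρ L)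
    (hF : ContinuousOn (Function.uncurry F) (Ico a b ×ˢ univ)) (hF₀ : ∀ r ∈ Ioo a b, F r 0 = 0)
    (hlip : ∀ r ∈ Ioo a b, ∀ v ∈ Icc 0 (g r), ∀ v' ∈ Icc 0 (g r),
      |F r v - F r v'| ≤ L r * |v - v'|)
    (hg : IsFluxSolution k ρ a b S g Q) (hg₀ : ∀ r ∈ Icc a b, 0 < g r) (hQ : Q a ≤ 0)
    (hS : ContinuousOn S (Ico a b)) (hSF : ∀ r ∈ Ico a b, S r < F r (g r)) :
    ∃ w P, IsFluxSolution k ρ a b (fun r => F r (w r)) w P ∧ P a = 0 ∧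
      ∀ r ∈ Icc a b, 0 < w r := by
  have htF := continuousOn_truncate hF (hg.continuousOn.mono Ico_subset_Icc_self)
  have htF₀ : ∀ r ∈ Ioo a b, ∀ v ≤ 0, truncate F g r v = 0 := fun r hr v =>
    truncate_of_nonpos (hF₀ r hr)
  have htlip : ∀ r ∈ Ioo a b, ∀ v v', |truncate F g r v - truncate F g r v'| ≤ L r * |v - v'| :=
    fun r hr => abs_truncate_sub_le (hg₀ r (Ioo_subset_Icc_self hr)).le (h.L_nonneg r hr)
      (hlip r hr)
  have hlt {w P : ℝ → ℝ} (hw : IsFluxSolution k ρ a b (fun r => truncate F g r (w r)) w P)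
      (hP : P a = 0) {r : ℝ} (hr : r ∈ Ico a b) (hgw : g r ≤ w r) : w r - g r < w b - g b :=
    (hw.sub hg).lt_right_of_forall_pos h.k_pos h.ρ_pos
      ((htF.comp (continuousOn_id.prodMk (hw.continuousOn.mono Ico_subset_Icc_self))
        fun r hr => ⟨hr, mem_univ _⟩).sub hS) (by linarith)
      (fun r hr hgr => by
        rw [truncate_of_ge (hg₀ r (Ico_subset_Icc_self hr)).le (sub_nonneg.1 hgr)]
        exact sub_pos.2 (hSF r hr)) hr (sub_nonneg.2 hgw)
  have hgb := hg₀ b (right_mem_Icc.2 h.lt.le)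
  have htF_zero : ∀ r ∈ Ioo a b, truncate F g r 0 = 0 := fun r hr => htF₀ r hr 0 le_rfl
  obtain ⟨w₁, P₁, hw₁, hw₁a, hP₁⟩ := h.exists_isFluxSolution htF htF_zero htlip (g a)
  obtain ⟨w, P, hw, hP, hwb⟩ := h.exists_isFluxSolution_right_eq htF htF_zero htlip hw₁ hP₁ <|
    Icc_subset_uIcc ⟨hgb.le, by linarith [hlt hw₁ hP₁ (left_mem_Ico.2 h.lt) hw₁a.ge]⟩
  have hpos := h.pos_of_right_pos htF₀ htlip hw hP (hwb ▸ hgb)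
  refine ⟨w, P, hw.congr fun r hr => ?_, hP, hpos⟩
  refine truncate_of_mem_Icc ⟨(hpos r (Ioo_subset_Icc_self hr)).le, ?_⟩
  by_contra! hgt
  linarith [hlt hw hP (Ioo_subset_Ico_self hr) hgt.le]

end Shooting

section PowerWeights

variable {b α θ κ p δ M R : ℝ}

/-- The weight `k` of `w' = k P` for the profile equation in the variable `r = 1 - t²`. -/
noncomputable def fluxWeight (b α r : ℝ) : ℝ := r ^ (-b) * (1 - r) ^ (-1 / 2 - α) / 4

/-- The weight `ρ` of `P' = ρ f` for the profile equation in the variable `r = 1 - t²`. -/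
noncomputable def massWeight (b α r : ℝ) : ℝ := r ^ (b - 1) * (1 - r) ^ (α - 1 / 2)

/-- The source `(1 - r) ^ θ w ^ p - κ w` of the profile equation in the variable `r = 1 - t²`. -/
noncomputable def reaction (p θ κ r w : ℝ) : ℝ := (1 - r) ^ θ * w ^ p - κ * w

lemma fluxWeight_pos {r : ℝ} (hr : r ∈ Ioo 0 1) : 0 < fluxWeight b α r :=
  div_pos (mul_pos (rpow_pos_of_pos hr.1 _) (rpow_pos_of_pos (sub_pos.2 hr.2) _)) four_pos

lemma massWeight_pos {r : ℝ} (hr : r ∈ Ioo 0 1) : 0 < massWeight b α r :=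
  mul_pos (rpow_pos_of_pos hr.1 _) (rpow_pos_of_pos (sub_pos.2 hr.2) _)

lemma continuousOn_one_sub_rpow (c : ℝ) : ContinuousOn (fun r : ℝ => (1 - r) ^ c) (Iio 1) :=
  (continuousOn_const.sub continuousOn_id).rpow_const fun _ hr => .inl (sub_pos.2 hr).ne'

lemma continuousOn_fluxWeight : ContinuousOn (fluxWeight b α) (Ioo 0 1) :=
  ((continuousOn_id.rpow_const fun _ hr => .inl hr.1.ne').mul
    ((continuousOn_one_sub_rpow _).mono fun _ hr => hr.2)).div_const 4

lemma continuousOn_massWeight : ContinuousOn (massWeight b α) (Ioo 0 1) :=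
  (continuousOn_id.rpow_const fun _ hr => .inl hr.1.ne').mul
    ((continuousOn_one_sub_rpow _).mono fun _ hr => hr.2)

lemma hasDerivAt_rpow_mul_one_sub_rpow (c d : ℝ) {r : ℝ} (hr : r ∈ Ioo (0 : ℝ) 1) :
    HasDerivAt (fun r : ℝ => r ^ c * (1 - r) ^ d)
      (r ^ (c - 1) * (1 - r) ^ (d - 1) * (c * (1 - r) - d * r)) r := by
  have h1r : 0 < 1 - r := sub_pos.2 hr.2
  refine ((hasDerivAt_rpow_const (p := c) (.inl hr.1.ne')).fun_mul
    (((hasDerivAt_id' r).const_sub 1).rpow_const (p := d) (.inl h1r.ne'))).congr_deriv ?_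
  have hr₀ : r ≠ 0 := hr.1.ne'
  rw [rpow_sub_one hr₀, rpow_sub_one h1r.ne']
  field_simp
  ring

lemma intervalIntegrable_massWeight_mul (hb : 0 < b) {z : ℝ} (hz : z ∈ Ico (0 : ℝ) 1) :
    IntervalIntegrable (fun r => massWeight b α r * (M * (1 - r) ^ (δ - 1))) volume 0 z := by
  have hcont : ContinuousOn (fun r : ℝ => (1 - r) ^ (α - 1 / 2) * (M * (1 - r) ^ (δ - 1)))
      (uIcc 0 z) := by
    rw [uIcc_of_le hz.1]
    exact ((continuousOn_one_sub_rpow _).mul (continuousOn_const.mul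
      (continuousOn_one_sub_rpow _))).mono fun r hr => hr.2.trans_lt hz.2
  simpa only [massWeight, mul_assoc] using
    (intervalIntegral.intervalIntegrable_rpow' (by linarith)).mul_continuousOn hcont

-- `z ^ b (1 - z) ^ ε` with `ε = α - 1 / 2 + δ < 0` has derivative
-- `z ^ (b - 1) (1 - z) ^ (ε - 1) (b (1 - z) - ε z)`, and the bracket is at least `min b (-ε)`.
lemma flux_massWeight_le (hb : 0 < b) (hδα : δ < 1 / 2 - α) (hM : 0 ≤ M) {z : ℝ}
    (hz : z ∈ Ico (0 : ℝ) 1) :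
    flux (massWeight b α) 0 (fun r => M * (1 - r) ^ (δ - 1)) z ≤
      M / min b (1 / 2 - α - δ) * (z ^ b * (1 - z) ^ (α - 1 / 2 + δ)) := by
  set m := min b (1 / 2 - α - δ)
  have hm : 0 < m := lt_min hb (by linarith)
  set G : ℝ → ℝ := fun r => M / m * (r ^ b * (1 - r) ^ (α - 1 / 2 + δ))
  have hG₀ : G 0 = 0 := by simp only [G, zero_rpow hb.ne', zero_mul, mul_zero]
  have hGcont : ContinuousOn G (Icc 0 z) :=
    continuousOn_const.mul ((continuous_rpow_const hb.le).continuousOn.mul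
      ((continuousOn_one_sub_rpow _).mono fun r hr => hr.2.trans_lt hz.2))
  have hsource : ∀ r ∈ Ioo 0 z, massWeight b α r * (M * (1 - r) ^ (δ - 1)) ≤
      M / m * (r ^ (b - 1) * (1 - r) ^ (α - 1 / 2 + δ - 1) *
        (b * (1 - r) - (α - 1 / 2 + δ) * r)) := fun r hr => by
    have h1r : 0 < 1 - r := by linarith [hr.2, hz.2]
    have hr₀ := hr.1
    have hbracket : m ≤ b * (1 - r) - (α - 1 / 2 + δ) * r := by
      nlinarith [min_le_left b (1 / 2 - α - δ), min_le_right b (1 / 2 - α - δ)]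
    calc massWeight b α r * (M * (1 - r) ^ (δ - 1))
        = M / m * (r ^ (b - 1) * (1 - r) ^ (α - 1 / 2 + δ - 1) * m) := by
          rw [massWeight, add_sub_assoc, rpow_add h1r]
          field_simp
      _ ≤ _ := by gcongr
  calc flux (massWeight b α) 0 (fun r => M * (1 - r) ^ (δ - 1)) z ≤ G z - G 0 :=
        intervalIntegral.integral_le_sub_of_hasDeriv_right_of_le hz.1 hGcont
          (fun r hr => ((hasDerivAt_rpow_mul_one_sub_rpow b _
            ⟨hr.1, hr.2.trans hz.2⟩).const_mul (M / m)).hasDerivWithinAt)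
          ((intervalIntegrable_iff_integrableOn_Icc_of_le hz.1).1
            (intervalIntegrable_massWeight_mul hb hz)) hsource
    _ = G z := by rw [hG₀, sub_zero]

lemma fluxWeight_mul_rpow (c : ℝ) {r : ℝ} (hr : r ∈ Ioo (0 : ℝ) 1) :
    fluxWeight b α r * (r ^ b * (1 - r) ^ c) = (1 - r) ^ (c - α - 1 / 2) / 4 := by
  have hexp : c - α - 1 / 2 = -1 / 2 - α + c := by ring
  rw [fluxWeight, hexp, rpow_add (sub_pos.2 hr.2), rpow_neg hr.1.le]
  field_simp [(rpow_pos_of_pos hr.1 b).ne']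

lemma intervalIntegrable_fluxWeight_mul_flux (hb : 0 < b) (hδ : 0 < δ) (hδα : δ < 1 / 2 - α)
    (hM : 0 ≤ M) : IntervalIntegrable (fun z => fluxWeight b α z *
      flux (massWeight b α) 0 (fun r => M * (1 - r) ^ (δ - 1)) z) volume 0 1 := by
  have hbound : IntervalIntegrable
      (fun z : ℝ => M / min b (1 / 2 - α - δ) / 4 * (1 - z) ^ (δ - 1)) volume 0 1 := by
    have := (intervalIntegral.intervalIntegrable_rpow' (r := δ - 1) (a := 1) (b := 0)
      (by linarith)).comp_sub_left 1
    simp only [sub_self, sub_zero] at this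
    exact this.const_mul _
  refine hbound.mono_fun' ?_ ?_ <;>
    rw [uIoc_of_le zero_le_one, ← restrict_Ioo_eq_restrict_Ioc]
  · exact (continuousOn_fluxWeight.mul ((continuousOn_primitive_Ico fun _ =>
      intervalIntegrable_massWeight_mul hb).mono Ioo_subset_Ico_self)).aestronglyMeasurable
      measurableSet_Ioo
  · filter_upwards [ae_restrict_mem measurableSet_Ioo] with z hz
    have hflux_nonneg : 0 ≤ flux (massWeight b α) 0 (fun r => M * (1 - r) ^ (δ - 1)) z :=
      intervalIntegral.integral_nonneg hz.1.le fun r hr => by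
        have h1r : 0 ≤ 1 - r := by linarith [hr.2, hz.2]
        have hr₀ := hr.1
        unfold massWeight
        positivity
    rw [norm_of_nonneg (mul_nonneg (fluxWeight_pos hz).le hflux_nonneg)]
    calc _ ≤ fluxWeight b α z *
          (M / min b (1 / 2 - α - δ) * (z ^ b * (1 - z) ^ (α - 1 / 2 + δ))) :=
          mul_le_mul_of_nonneg_left (flux_massWeight_le hb hδα hM (Ioo_subset_Ico_self hz))
            (fluxWeight_pos hz).le
      _ = M / min b (1 / 2 - α - δ) * ((1 - z) ^ (α - 1 / 2 + δ - α - 1 / 2) / 4) := by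
          rw [mul_left_comm, fluxWeight_mul_rpow _ hz]
      _ = _ := by ring_nf

lemma admissibleWeights_powerWeights (hb : 0 < b) (hδ : 0 < δ) (hδα : δ < 1 / 2 - α) (hM : 0 ≤ M) :
    AdmissibleWeights 0 1 (fluxWeight b α) (massWeight b α) fun r => M * (1 - r) ^ (δ - 1) where
  lt := one_pos
  continuousOn_k := continuousOn_fluxWeight
  continuousOn_ρ := continuousOn_massWeight
  continuousOn_L := continuousOn_const.mul ((continuousOn_one_sub_rpow _).mono fun _ hr => hr.2)
  k_pos _ := fluxWeight_pos
  ρ_pos _ := massWeight_pos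
  L_nonneg _ hr := mul_nonneg hM (rpow_nonneg (sub_nonneg.2 hr.2.le) _)
  intervalIntegrable_source _ := intervalIntegrable_massWeight_mul hb
  intervalIntegrable_flux := intervalIntegrable_fluxWeight_mul_flux hb hδ hδα hM

lemma abs_rpow_sub_rpow_le (hp : 1 ≤ p) {v v' : ℝ} (hv : v ∈ Icc 0 R) (hv' : v' ∈ Icc 0 R) :
    |v ^ p - v' ^ p| ≤ p * R ^ (p - 1) * |v - v'| := by
  refine (convex_Icc 0 R).norm_image_sub_le_of_norm_hasDerivWithin_le (f := fun x : ℝ => x ^ p)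
    (f' := fun x => p * x ^ (p - 1))
    (fun x _ => (hasDerivAt_rpow_const (.inr hp)).hasDerivWithinAt) (fun x hx => ?_) hv' hv
  rw [norm_of_nonneg (mul_nonneg (by linarith) (rpow_nonneg hx.1 _))]
  exact mul_le_mul_of_nonneg_left (rpow_le_rpow hx.1 hx.2 (by linarith)) (by linarith)

lemma continuousOn_reaction (hp : 0 ≤ p) :
    ContinuousOn (Function.uncurry (reaction p θ κ)) (Ico 0 1 ×ˢ univ) :=
  (((continuousOn_one_sub_rpow θ).comp continuousOn_fst fun _ hq => hq.1.2).mul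
    ((continuous_rpow_const hp).comp continuous_snd).continuousOn).sub
    (continuousOn_const.mul continuousOn_snd)

lemma reaction_zero_right (hp : p ≠ 0) (r : ℝ) : reaction p θ κ r 0 = 0 := by
  rw [reaction, zero_rpow hp, mul_zero, mul_zero, sub_zero]

lemma abs_reaction_sub_le (hp : 1 ≤ p) (hδθ : δ - 1 ≤ θ) (hδ : δ ≤ 1) {r v v' : ℝ}
    (hr : r ∈ Ioo (0 : ℝ) 1) (hv : v ∈ Icc 0 R) (hv' : v' ∈ Icc 0 R) :
    |reaction p θ κ r v - reaction p θ κ r v'| ≤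
      (p * R ^ (p - 1) + |κ|) * (1 - r) ^ (δ - 1) * |v - v'| := by
  have h1r : 0 < 1 - r := sub_pos.2 hr.2
  have hθ : (1 - r) ^ θ ≤ (1 - r) ^ (δ - 1) :=
    rpow_le_rpow_of_exponent_ge h1r (by linarith [hr.1]) hδθ
  have hone : 1 ≤ (1 - r) ^ (δ - 1) :=
    one_le_rpow_of_pos_of_le_one_of_nonpos h1r (by linarith [hr.1]) (by linarith)
  calc |reaction p θ κ r v - reaction p θ κ r v'|
      = |(1 - r) ^ θ * (v ^ p - v' ^ p) - κ * (v - v')| := by unfold reaction; ring_nf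
    _ ≤ |(1 - r) ^ θ * (v ^ p - v' ^ p)| + |κ * (v - v')| := abs_sub _ _
    _ = (1 - r) ^ θ * |v ^ p - v' ^ p| + 1 * |κ| * |v - v'| := by
        rw [abs_mul, abs_mul, abs_of_pos (rpow_pos_of_pos h1r θ), one_mul]
    _ ≤ (1 - r) ^ (δ - 1) * (p * R ^ (p - 1) * |v - v'|) + (1 - r) ^ (δ - 1) * |κ| * |v - v'| := by
        gcongr
        exact abs_rpow_sub_rpow_le hp hv hv'
    _ = _ := by ring

lemma exists_pos_isFluxSolution_reaction_of_supersolution (hb : 0 < b) (hα : α < 1 / 2)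
    (hθ : -1 < θ) (hp : 1 < p) {S g Q : ℝ → ℝ}
    (hg : IsFluxSolution (fluxWeight b α) (massWeight b α) 0 1 S g Q)
    (hg₀ : ∀ r ∈ Icc (0 : ℝ) 1, 0 < g r) (hQ : Q 0 ≤ 0) (hS : ContinuousOn S (Ico 0 1))
    (hSg : ∀ r ∈ Ico (0 : ℝ) 1, S r < reaction p θ κ r (g r)) :
    ∃ w P, IsFluxSolution (fluxWeight b α) (massWeight b α) 0 1 (fun r => reaction p θ κ r (w r))
      w P ∧ P 0 = 0 ∧ ∀ r ∈ Icc (0 : ℝ) 1, 0 < w r := by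
  obtain ⟨δ, hδ, hδlt⟩ := exists_between (lt_min (sub_pos.2 hα) (lt_min (neg_lt_iff_pos_add.1 hθ)
    one_pos))
  simp only [lt_min_iff] at hδlt
  obtain ⟨R, hR⟩ := isCompact_Icc.bddAbove_image hg.continuousOn
  have hgR : ∀ r ∈ Icc (0 : ℝ) 1, g r ≤ R := fun r hr => hR (mem_image_of_mem g hr)
  have hR₀ : 0 ≤ R := (hg₀ 0 (by simp)).le.trans (hgR 0 (by simp))
  have hweights := admissibleWeights_powerWeights (M := p * R ^ (p - 1) + |κ|) hb hδ hδlt.1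
    (by positivity)
  refine hweights.exists_pos_isFluxSolution_of_supersolution
    (continuousOn_reaction (by linarith)) (fun r _ => reaction_zero_right (by linarith) r)
    (fun r hr v hv v' hv' => ?_) hg hg₀ hQ hS hSg
  have hgr := hgR r (Ioo_subset_Icc_self hr)
  exact abs_reaction_sub_le hp.le (by linarith [hδlt.2.1]) hδlt.2.2.le hr
    (Icc_subset_Icc_right hgr hv) (Icc_subset_Icc_right hgr hv')

lemma exists_pos_rpow_eq_mul (hp : p ≠ 1) {T : ℝ} (hT : 0 < T) : ∃ C > 0, C ^ p = T * C := by
  have hp' : p - 1 ≠ 0 := sub_ne_zero.2 hp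
  have hC : 0 < T ^ (p - 1)⁻¹ := rpow_pos_of_pos hT _
  refine ⟨_, hC, ?_⟩
  calc (T ^ (p - 1)⁻¹) ^ p = (T ^ (p - 1)⁻¹) ^ (p - 1) * T ^ (p - 1)⁻¹ := by
        rw [← rpow_add_one hC.ne', sub_add_cancel]
    _ = T * T ^ (p - 1)⁻¹ := by rw [rpow_inv_rpow hT.le hp']

lemma exists_forall_lt_mul_rpow_add_div {A B c : ℝ} (hA : 0 < A) (hB : 0 < B) (hc : 0 ≤ c) :
    ∃ T > 0, ∀ s > 0, B < T * s ^ c + A / s := by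
  refine ⟨B / (A / B) ^ c, by positivity, fun s hs => ?_⟩
  rcases lt_or_ge s (A / B) with hlt | hge
  · have : B < A / s := by rwa [lt_div_comm₀ hB hs]
    have : 0 < B / (A / B) ^ c * s ^ c := by positivity
    linarith
  · have : B ≤ B / (A / B) ^ c * s ^ c := by
      rw [div_mul_eq_mul_div, le_div_iff₀ (by positivity)]
      gcongr
    have : 0 < A / s := by positivity
    linarith

lemma isFluxSolution_two_sub_sqrt (hb : 0 < b) :
    IsFluxSolution (fluxWeight b α) (massWeight b α) 0 1
      (fun r => 2 * ((b * (1 - r) - α * r) / √(1 - r))) (fun r => 2 - √(1 - r))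
      fun r => 2 * (r ^ b * (1 - r) ^ α) where
  continuousOn := by fun_prop
  continuousOn_flux := continuousOn_const.mul ((continuous_rpow_const hb.le).continuousOn.mul
    ((continuousOn_one_sub_rpow α).mono fun _ hr => hr.2))
  hasDerivAt r hr := by
    have h1r : 0 < 1 - r := sub_pos.2 hr.2
    refine ((((hasDerivAt_id' r).const_sub 1).sqrt h1r.ne').const_sub 2).congr_deriv ?_
    have hexp : α - α - 1 / 2 = -(1 / 2 : ℝ) := by ring
    rw [mul_left_comm, fluxWeight_mul_rpow α hr, hexp, rpow_neg h1r.le, ← sqrt_eq_rpow]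
    ring
  hasDerivAt_flux r hr := by
    have h1r : 0 < 1 - r := sub_pos.2 hr.2
    refine ((hasDerivAt_rpow_mul_one_sub_rpow b α hr).const_mul 2).congr_deriv ?_
    have hexp : α - 1 = α - 1 / 2 - 1 / 2 := by ring
    rw [massWeight, hexp, rpow_sub h1r, ← sqrt_eq_rpow]
    ring

lemma exists_const_supersolution (hp : 1 < p) (hθ : θ ≤ 0) :
    ∃ C > 0, ∀ r ∈ Ico (0 : ℝ) 1, 0 < reaction p θ κ r C := by
  obtain ⟨C, hC, hCp⟩ := exists_pos_rpow_eq_mul hp.ne' (T := |κ| + 1) (by positivity)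
  refine ⟨C, hC, fun r hr => ?_⟩
  have hone : 1 ≤ (1 - r) ^ θ :=
    one_le_rpow_of_pos_of_le_one_of_nonpos (sub_pos.2 hr.2) (by linarith [hr.1]) hθ
  calc 0 < (|κ| + 1 - κ) * C := mul_pos (by linarith [le_abs_self κ]) hC
    _ = 1 * ((|κ| + 1) * C) - κ * C := by ring
    _ ≤ (1 - r) ^ θ * ((|κ| + 1) * C) - κ * C := by gcongr
    _ = reaction p θ κ r C := by rw [reaction, hCp]

-- In the variable `t = √(1 - r)` this is `C (2 - t)`, whose source behaves like `-2 α C / t` near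
-- `t = 0`, where the factor `(1 - r) ^ θ` of the absorption degenerates.
lemma exists_two_sub_sqrt_supersolution (hb : 0 < b) (hα : 0 < α) (hp : 1 < p) (hθ : 0 ≤ θ) :
    ∃ C > 0, ∀ r ∈ Ico (0 : ℝ) 1, C * (2 * ((b * (1 - r) - α * r) / √(1 - r))) <
      reaction p θ κ r (C * (2 - √(1 - r))) := by
  obtain ⟨T, hT, hTlt⟩ := exists_forall_lt_mul_rpow_add_div (A := 2 * α)
    (B := 2 * b + 2 * α + 2 * |κ|) (c := 2 * θ) (by positivity) (by positivity) (by positivity)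
  obtain ⟨C, hC, hCp⟩ := exists_pos_rpow_eq_mul hp.ne' hT
  refine ⟨C, hC, fun r hr => ?_⟩
  have h1r : 0 < 1 - r := sub_pos.2 hr.2
  have hpow : (1 - r) ^ θ = √(1 - r) ^ (2 * θ) := by
    rw [sqrt_eq_rpow, ← rpow_mul h1r.le]
    ring_nf
  have hs : 0 < √(1 - r) := sqrt_pos.2 h1r
  have hs₁ : √(1 - r) ≤ 1 := sqrt_le_one.2 (by linarith [hr.1])
  have hr_eq : r = 1 - √(1 - r) ^ 2 := by rw [sq_sqrt h1r.le, sub_sub_cancel]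
  rw [reaction, hpow]
  set s := √(1 - r)
  have hsource : 2 * ((b * (1 - r) - α * r) / s) = 2 * (b + α) * s - 2 * α / s := by
    rw [hr_eq]
    field_simp
    ring
  have hlinear : 2 * (b + α) * s + κ * (2 - s) ≤ 2 * b + 2 * α + 2 * |κ| := by
    nlinarith [le_abs_self κ, abs_nonneg κ]
  calc C * (2 * ((b * (1 - r) - α * r) / s))
      < C * (T * s ^ (2 * θ) - κ * (2 - s)) := by
        rw [hsource]
        exact mul_lt_mul_of_pos_left (by linarith [hTlt s hs]) hC
    _ = s ^ (2 * θ) * C ^ p - κ * (C * (2 - s)) := by rw [hCp]; ring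
    _ ≤ s ^ (2 * θ) * (C * (2 - s)) ^ p - κ * (C * (2 - s)) := by
        gcongr
        exact le_mul_of_one_le_right hC.le (by linarith)

-- The Keller–Osserman condition enters as `-1 < θ`, that is, as integrability of the source at
-- `r = 1` against the weights.
lemma exists_pos_isFluxSolution_reaction (hb : 0 < b) (hα : α < 1 / 2) (hθ : -1 < θ)
    (hθα : θ ≤ 0 ∨ 0 < α) (hp : 1 < p) :
    ∃ w P, IsFluxSolution (fluxWeight b α) (massWeight b α) 0 1 (fun r => reaction p θ κ r (w r))
      w P ∧ P 0 = 0 ∧ ∀ r ∈ Icc (0 : ℝ) 1, 0 < w r := by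
  rcases le_or_gt θ 0 with hθ₀ | hθ₀
  · obtain ⟨C, hC, hlt⟩ := exists_const_supersolution (κ := κ) hp hθ₀
    exact exists_pos_isFluxSolution_reaction_of_supersolution hb hα hθ hp
      (isFluxSolution_const (fun _ _ => rfl) C) (fun _ _ => hC) le_rfl continuousOn_const hlt
  · obtain ⟨C, hC, hlt⟩ := exists_two_sub_sqrt_supersolution (κ := κ) hb
      (hθα.resolve_left hθ₀.not_ge) hp hθ₀.le
    refine exists_pos_isFluxSolution_reaction_of_supersolution hb hα hθ hp
      ((isFluxSolution_two_sub_sqrt hb).const_mul C) (fun r hr => mul_pos hC ?_)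
      (by simp only [zero_rpow hb.ne', zero_mul, mul_zero, le_refl]) ?_ hlt
    · linarith [sqrt_le_one.2 (sub_le_self 1 hr.1)]
    · exact continuousOn_const.mul (continuousOn_const.mul ((by fun_prop : ContinuousOn
        (fun r => b * (1 - r) - α * r) (Ico 0 1)).div (by fun_prop) fun r hr =>
          (sqrt_pos.2 (sub_pos.2 hr.2)).ne'))

end PowerWeights

section Regularity

variable {f g : ℝ → ℝ} {a b : ℝ}

lemma tendsto_nhdsGT_of_continuousOn_Ico (hab : a < b) (hf : ContinuousOn f (Ico a b)) :
    Tendsto f (𝓝[>] a) (𝓝 (f a)) := by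
  have := hf a (left_mem_Ico.2 hab)
  rw [ContinuousWithinAt, nhdsWithin_Ico_eq_nhdsGE hab] at this
  exact this.mono_left (nhdsWithin_mono a Ioi_subset_Ici_self)

lemma hasDerivWithinAt_Ico_of_continuousOn (hf : ContinuousOn f (Ico a b))
    (hf' : ∀ r ∈ Ioo a b, HasDerivAt f (g r) r) (hg : ContinuousOn g (Ico a b)) {r : ℝ}
    (hr : r ∈ Ico a b) : HasDerivWithinAt f (g r) (Ico a b) r := by
  rcases hr.1.eq_or_lt with rfl | har
  · have hIoo : Ioo a b ∈ 𝓝[>] a := Ioo_mem_nhdsGT hr.2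
    refine (hasDerivWithinAt_Ici_of_tendsto_deriv
      (fun x hx => (hf' x hx).differentiableAt.differentiableWithinAt)
      ((hf a hr).mono Ioo_subset_Ico_self) hIoo ?_).mono Ico_subset_Ici_self
    refine (tendsto_nhdsGT_of_continuousOn_Ico hr.2 hg).congr' ?_
    filter_upwards [hIoo] with x hx using (hf' x hx).deriv.symm
  · exact (hf' r ⟨har, hr.2⟩).hasDerivWithinAt

lemma contDiffOn_Ico_succ_of_hasDerivAt {m : ℕ} (hf : ContinuousOn f (Ico a b))
    (hf' : ∀ r ∈ Ioo a b, HasDerivAt f (g r) r) (hg : ContDiffOn ℝ m g (Ico a b)) :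
    ContDiffOn ℝ (m + 1) f (Ico a b) := by
  have hwithin : ∀ r ∈ Ico a b, HasDerivWithinAt f (g r) (Ico a b) r := fun _ =>
    hasDerivWithinAt_Ico_of_continuousOn hf hf' hg.continuousOn
  have hunique : UniqueDiffOn ℝ (Ico a b) := uniqueDiffOn_Ico a b
  refine (contDiffOn_succ_iff_derivWithin hunique).2
    ⟨fun r hr => (hwithin r hr).differentiableWithinAt, fun h => absurd h (by simp),
      hg.congr fun r hr => (hwithin r hr).derivWithin (hunique r hr)⟩

variable {H P : ℝ → ℝ} {T : ℝ}

lemma exists_continuousOn_eq_rpow_mul (hb : 0 < b) (hT : 0 < T) (hP : ContinuousOn P (Ico 0 T))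
    (hP₀ : P 0 = 0) (hP' : ∀ r ∈ Ioo 0 T, HasDerivAt P (r ^ (b - 1) * H r) r)
    (hH : ContinuousOn H (Ico 0 T)) :
    ∃ J : ℝ → ℝ, ContinuousOn J (Ico 0 T) ∧ ∀ r ∈ Ioo 0 T, P r = r ^ b * J r := by
  have hIoo : Ioo 0 T ∈ 𝓝[>] (0 : ℝ) := Ioo_mem_nhdsGT hT
  have hrpow : ContinuousOn (fun r : ℝ => r ^ b) (Ico 0 T) :=
    (continuous_rpow_const hb.le).continuousOn
  have hlim : Tendsto (fun r => P r / r ^ b) (𝓝[>] 0) (𝓝 (H 0 / b)) := by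
    refine HasDerivAt.lhopital_zero_nhdsGT (f' := fun r => r ^ (b - 1) * H r)
      (g' := fun r => b * r ^ (b - 1)) ?_ ?_ ?_
      (by simpa only [hP₀] using tendsto_nhdsGT_of_continuousOn_Ico hT hP)
      (by simpa only [zero_rpow hb.ne'] using tendsto_nhdsGT_of_continuousOn_Ico hT hrpow)
      (((tendsto_nhdsGT_of_continuousOn_Ico hT hH).div_const b).congr' ?_) <;>
    filter_upwards [hIoo] with r hr
    · exact hP' r hr
    · exact hasDerivAt_rpow_const (.inl hr.1.ne')
    · exact (mul_pos hb (rpow_pos_of_pos hr.1 _)).ne'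
    · rw [mul_comm b, mul_div_mul_left _ _ (rpow_pos_of_pos hr.1 _).ne']
  refine ⟨Function.update (fun r => P r / r ^ b) 0 (H 0 / b), ?_, fun r hr => ?_⟩
  · have hdiff : Ico 0 T \ {0} = Ioo 0 T := Ico_sdiff_left
    rw [continuousOn_update_iff, hdiff]
    exact ⟨(hP.mono Ioo_subset_Ico_self).div (hrpow.mono Ioo_subset_Ico_self)
      fun r hr => (rpow_pos_of_pos hr.1 _).ne',
      fun _ => hlim.mono_left (nhdsWithin_mono 0 Ioo_subset_Ioi_self)⟩
  · rw [Function.update_of_ne hr.1.ne', mul_div_cancel₀ _ (rpow_pos_of_pos hr.1 _).ne']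

lemma hasDerivAt_div_rpow {r : ℝ} (hr : 0 < r) (hP' : HasDerivAt P (r ^ (b - 1) * H r) r) :
    HasDerivAt (fun r => P r / r ^ b) ((r ^ b * H r - b * P r) / r ^ (b + 1)) r := by
  have hrb : r ^ b ≠ 0 := (rpow_pos_of_pos hr b).ne'
  refine (hP'.fun_div (hasDerivAt_rpow_const (.inl hr.ne')) hrb).congr_deriv ?_
  rw [rpow_sub_one hr.ne', rpow_add_one hr.ne']
  field_simp

-- By `hasDerivAt_div_rpow`, `J = P / r ^ b` has derivative `P₁ / r ^ (b + 1)` for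
-- `P₁ = r ^ b H - b P`, and `P₁' = r ^ b H'`: the same problem with `(b, H)` replaced by
-- `(b + 1, H')`.
lemma exists_contDiffOn_eq_rpow_mul (m : ℕ) (hb : 0 < b) (hT : 0 < T)
    (hP : ContinuousOn P (Ico 0 T)) (hP₀ : P 0 = 0)
    (hP' : ∀ r ∈ Ioo 0 T, HasDerivAt P (r ^ (b - 1) * H r) r) (hH : ContDiffOn ℝ m H (Ico 0 T)) :
    ∃ J : ℝ → ℝ, ContDiffOn ℝ m J (Ico 0 T) ∧ ∀ r ∈ Ioo 0 T, P r = r ^ b * J r := by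
  induction m generalizing b H P with
  | zero =>
    obtain ⟨J, hJ, hPJ⟩ := exists_continuousOn_eq_rpow_mul hb hT hP hP₀ hP' hH.continuousOn
    exact ⟨J, contDiffOn_zero.2 hJ, hPJ⟩
  | succ m ih =>
    push_cast at hH ⊢
    obtain ⟨hHdiff, -, hH'⟩ := (contDiffOn_succ_iff_derivWithin (uniqueDiffOn_Ico 0 T)).1 hH
    set H' := derivWithin H (Ico 0 T)
    obtain ⟨J, hJ, hPJ⟩ := exists_continuousOn_eq_rpow_mul hb hT hP hP₀ hP' hH.continuousOn
    obtain ⟨J₁, hJ₁, hPJ₁⟩ := ih (b := b + 1) (H := H') (P := fun r => r ^ b * H r - b * P r)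
      (by linarith)
      (((continuous_rpow_const hb.le).continuousOn.mul hH.continuousOn).sub (hP.const_smul b))
      (by rw [hP₀, zero_rpow hb.ne', zero_mul, mul_zero, sub_zero])
      (fun r hr => by
        have hHr : HasDerivAt H (H' r) r := (hHdiff r (Ioo_subset_Ico_self hr)).hasDerivWithinAt
          |>.hasDerivAt (Ico_mem_nhds hr.1 hr.2)
        refine (((hasDerivAt_rpow_const (p := b) (.inl hr.1.ne')).fun_mul hHr).fun_sub
          ((hP' r hr).const_mul b)).congr_deriv ?_
        rw [add_sub_cancel_right]
        ring) hH'
    refine ⟨J, contDiffOn_Ico_succ_of_hasDerivAt hJ (fun r hr => ?_) hJ₁, hPJ⟩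
    refine ((hasDerivAt_div_rpow hr.1 (hP' r hr)).congr_of_eventuallyEq ?_).congr_deriv ?_
    · filter_upwards [Ioo_mem_nhds hr.1 hr.2] with x hx
      rw [hPJ x hx, mul_div_cancel_left₀ _ (rpow_pos_of_pos hx.1 b).ne']
    · rw [hPJ₁ r hr, mul_div_cancel_left₀ _ (rpow_pos_of_pos hr.1 _).ne']

end Regularity

section ProfileRegularity

variable {b α θ κ p : ℝ} {f w P : ℝ → ℝ}

lemma contDiffOn_one_sub_rpow (c : ℝ) {m : ℕ} :
    ContDiffOn ℝ m (fun r : ℝ => (1 - r) ^ c) (Ico 0 1) :=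
  (contDiffOn_const.sub contDiffOn_id).rpow_const_of_ne fun _ hr => (sub_pos.2 hr.2).ne'

lemma IsFluxSolution.contDiffOn_succ {m : ℕ} (hb : 0 < b)
    (h : IsFluxSolution (fluxWeight b α) (massWeight b α) 0 1 f w P) (hP₀ : P 0 = 0)
    (hf : ContDiffOn ℝ m f (Ico 0 1)) : ContDiffOn ℝ (m + 1) w (Ico 0 1) := by
  obtain ⟨J, hJ, hPJ⟩ := exists_contDiffOn_eq_rpow_mul m hb one_pos h.continuousOn_flux hP₀
    (fun r hr => by simpa only [massWeight, mul_assoc] using h.hasDerivAt_flux r hr)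
    ((contDiffOn_one_sub_rpow (α - 1 / 2)).mul hf)
  refine contDiffOn_Ico_succ_of_hasDerivAt (h.continuousOn.mono Ico_subset_Icc_self)
    (fun r hr => (h.hasDerivAt r hr).congr_deriv ?_)
    (((contDiffOn_one_sub_rpow (-1 / 2 - α)).div_const 4).mul hJ)
  rw [hPJ r hr, fluxWeight, rpow_neg hr.1.le]
  field_simp [(rpow_pos_of_pos hr.1 b).ne']

lemma contDiffOn_of_isFluxSolution_reaction (m : ℕ) (hb : 0 < b)
    (h : IsFluxSolution (fluxWeight b α) (massWeight b α) 0 1 (fun r => reaction p θ κ r (w r)) w P)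
    (hP₀ : P 0 = 0) (hw : ∀ r ∈ Ico (0 : ℝ) 1, 0 < w r) : ContDiffOn ℝ m w (Ico 0 1) := by
  induction m with
  | zero => exact contDiffOn_zero.2 (h.continuousOn.mono Ico_subset_Icc_self)
  | succ m ih =>
    exact_mod_cast h.contDiffOn_succ hb hP₀ (((contDiffOn_one_sub_rpow θ).mul
      (ih.rpow_const_of_ne fun r hr => (hw r hr).ne')).sub (contDiffOn_const.mul ih))

end ProfileRegularity

section ProfileEquation

variable {b α p μ d ℓ : ℝ} {f w P : ℝ → ℝ}

lemma fluxWeight_mul_massWeight {r : ℝ} (hr : r ∈ Ioo (0 : ℝ) 1) :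
    fluxWeight b α r * massWeight b α r = (4 * r * (1 - r))⁻¹ := by
  have h1r : 0 < 1 - r := sub_pos.2 hr.2
  have hr_exp : r ^ (-b) * r ^ (b - 1) = r⁻¹ := by
    rw [← rpow_add hr.1, ← rpow_neg_one]
    ring_nf
  have h1r_exp : (1 - r) ^ (-1 / 2 - α) * (1 - r) ^ (α - 1 / 2) = (1 - r)⁻¹ := by
    rw [← rpow_add h1r, ← rpow_neg_one]
    ring_nf
  calc fluxWeight b α r * massWeight b α r
      = (r ^ (-b) * r ^ (b - 1)) * ((1 - r) ^ (-1 / 2 - α) * (1 - r) ^ (α - 1 / 2)) / 4 := by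
        rw [fluxWeight, massWeight]; ring
    _ = (4 * r * (1 - r))⁻¹ := by rw [hr_exp, h1r_exp, mul_inv, mul_inv]; ring

lemma hasDerivAt_fluxWeight {r : ℝ} (hr : r ∈ Ioo (0 : ℝ) 1) :
    HasDerivAt (fluxWeight b α)
      (fluxWeight b α r * (-b / r + (1 / 2 + α) / (1 - r))) r := by
  have hr₀ : r ≠ 0 := hr.1.ne'
  have h1r : 1 - r ≠ 0 := (sub_pos.2 hr.2).ne'
  refine ((hasDerivAt_rpow_mul_one_sub_rpow (-b) (-1 / 2 - α) hr).div_const 4).congr_deriv ?_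
  rw [fluxWeight, rpow_sub_one hr₀, rpow_sub_one h1r]
  field_simp
  ring

lemma IsFluxSolution.hypergeometric_ode
    (h : IsFluxSolution (fluxWeight b α) (massWeight b α) 0 1 f w P) {r : ℝ}
    (hr : r ∈ Ioo (0 : ℝ) 1) :
    4 * r * (1 - r) * deriv (deriv w) r + (4 * b * (1 - r) - (2 + 4 * α) * r) * deriv w r
      = f r := by
  have hr₀ : r ≠ 0 := hr.1.ne'
  have h1r : 1 - r ≠ 0 := (sub_pos.2 hr.2).ne'
  have hderiv : deriv w =ᶠ[𝓝 r] fun r => fluxWeight b α r * P r := by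
    filter_upwards [Ioo_mem_nhds hr.1 hr.2] with x hx using (h.hasDerivAt x hx).deriv
  rw [hderiv.deriv_eq, hderiv.eq_of_nhds,
    ((hasDerivAt_fluxWeight hr).fun_mul (h.hasDerivAt_flux r hr)).deriv, ← mul_assoc,
    fluxWeight_mul_massWeight hr]
  field_simp
  ring

lemma one_sub_sq_mem_Ioo {t : ℝ} (ht : t ∈ Ioo (0 : ℝ) 1) : 1 - t ^ 2 ∈ Ioo (0 : ℝ) 1 :=
  ⟨by nlinarith [ht.1, ht.2], by nlinarith [ht.1]⟩

lemma hasDerivAt_rpow_mul_comp_one_sub_sq {w' t : ℝ} (ht : 0 < t)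
    (hw : HasDerivAt w w' (1 - t ^ 2)) :
    HasDerivAt (fun t => t ^ α * w (1 - t ^ 2))
      (t ^ (α - 1) * (α * w (1 - t ^ 2) - 2 * (1 - (1 - t ^ 2)) * w')) t := by
  refine ((hasDerivAt_rpow_const (p := α) (.inl ht.ne')).fun_mul
    (hw.comp t ((hasDerivAt_pow 2 t).const_sub 1))).congr_deriv ?_
  rw [rpow_sub_one ht.ne']
  field_simp
  simp only [Function.comp_apply]
  ring

lemma angular_operator_rpow_mul_comp_one_sub_sq (hw : ContDiffOn ℝ 2 w (Ioo 0 1))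
    (hμ : α ^ 2 - α + μ = 0) {t : ℝ} (ht : t ∈ Ioo (0 : ℝ) 1) :
    (1 - t ^ 2) * deriv (deriv fun t => t ^ α * w (1 - t ^ 2)) t
        - (d - 1) * t * deriv (fun t => t ^ α * w (1 - t ^ 2)) t
        + μ / t ^ 2 * (t ^ α * w (1 - t ^ 2)) + ℓ * (t ^ α * w (1 - t ^ 2))
      = t ^ α * (4 * (1 - t ^ 2) * (1 - (1 - t ^ 2)) * deriv (deriv w) (1 - t ^ 2)
        + (4 * ((d - 1) / 2) * (1 - (1 - t ^ 2)) - (2 + 4 * α) * (1 - t ^ 2))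
          * deriv w (1 - t ^ 2)
        + (ℓ - α * (α + d - 2)) * w (1 - t ^ 2)) := by
  have hw' : ContDiffOn ℝ 1 (deriv w) (Ioo 0 1) :=
    ((contDiffOn_succ_iff_deriv_of_isOpen isOpen_Ioo).1 (by exact_mod_cast hw)).2.2
  have hdw : ∀ r ∈ Ioo (0 : ℝ) 1, HasDerivAt w (deriv w r) r := fun r hr =>
    ((hw.differentiableOn two_ne_zero).differentiableAt (Ioo_mem_nhds hr.1 hr.2)).hasDerivAt
  have hdw' : HasDerivAt (deriv w) (deriv (deriv w) (1 - t ^ 2)) (1 - t ^ 2) :=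
    ((hw'.differentiableOn one_ne_zero).differentiableAt
      (isOpen_Ioo.mem_nhds (one_sub_sq_mem_Ioo ht))).hasDerivAt
  have hderiv : ∀ s ∈ Ioo (0 : ℝ) 1, deriv (fun t => t ^ α * w (1 - t ^ 2)) s =
      s ^ (α - 1) * (α * w (1 - s ^ 2) - 2 * (1 - (1 - s ^ 2)) * deriv w (1 - s ^ 2)) :=
    fun s hs => (hasDerivAt_rpow_mul_comp_one_sub_sq hs.1 (hdw _ (one_sub_sq_mem_Ioo hs))).deriv
  have hinner := ((hdw _ (one_sub_sq_mem_Ioo ht)).const_mul α).fun_sub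
    ((((hasDerivAt_id' (1 - t ^ 2)).const_sub 1).const_mul 2).fun_mul hdw')
  have hderiv₂ := (hasDerivAt_rpow_mul_comp_one_sub_sq (α := α - 1) ht.1 hinner).deriv
  have heq : deriv (fun t => t ^ α * w (1 - t ^ 2)) =ᶠ[𝓝 t] _ :=
    eventually_of_mem (Ioo_mem_nhds ht.1 ht.2) hderiv
  have ht₀ : t ≠ 0 := ht.1.ne'
  rw [heq.deriv_eq, hderiv t ht, hderiv₂, rpow_sub_one ht₀, rpow_sub_one ht₀, eq_sub_of_add_eq' hμ]
  field_simp
  ring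

lemma rpow_mul_comp_one_sub_sq_rpow {t : ℝ} (ht : 0 < t) (hw : 0 ≤ w (1 - t ^ 2)) :
    (t ^ α * w (1 - t ^ 2)) ^ p =
      t ^ α * ((1 - (1 - t ^ 2)) ^ ((p - 1) * α / 2) * w (1 - t ^ 2) ^ p) := by
  rw [sub_sub_cancel, mul_rpow (by positivity) hw, ← rpow_natCast, ← rpow_mul ht.le,
    ← rpow_mul ht.le, ← mul_assoc, ← rpow_add ht]
  congr 2
  push_cast
  ring

lemma IsFluxSolution.angular_equation (hw : ContDiffOn ℝ 2 w (Ioo 0 1))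
    (hμ : α ^ 2 - α + μ = 0)
    (h : IsFluxSolution (fluxWeight ((d - 1) / 2) α) (massWeight ((d - 1) / 2) α) 0 1
      (fun r => reaction p ((p - 1) * α / 2) (ℓ - α * (α + d - 2)) r (w r)) w P)
    (hw₀ : ∀ r ∈ Ioo (0 : ℝ) 1, 0 < w r) {t : ℝ} (ht : t ∈ Ioo (0 : ℝ) 1) :
    (1 - t ^ 2) * deriv (deriv fun t => t ^ α * w (1 - t ^ 2)) t
        - (d - 1) * t * deriv (fun t => t ^ α * w (1 - t ^ 2)) t
        + μ / t ^ 2 * (t ^ α * w (1 - t ^ 2)) + ℓ * (t ^ α * w (1 - t ^ 2))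
      = (t ^ α * w (1 - t ^ 2)) ^ p := by
  have hr := one_sub_sq_mem_Ioo ht
  rw [angular_operator_rpow_mul_comp_one_sub_sq hw hμ ht, h.hypergeometric_ode hr, reaction,
    rpow_mul_comp_one_sub_sq_rpow ht.1 (hw₀ _ hr).le, sub_add_cancel]

end ProfileEquation

section Laplacian

variable {n : ℕ} {f h : EuclideanSpace ℝ (Fin n) → ℝ} {f' h' x : EuclideanSpace ℝ (Fin n)}
  {ℓ ℓ' : ℝ}

/-- `f` is `C²` at `x` with gradient `f'` and Laplacian `ℓ` there. -/
structure HasLaplacianAt (f : EuclideanSpace ℝ (Fin n) → ℝ) (f' : EuclideanSpace ℝ (Fin n))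
    (ℓ : ℝ) (x : EuclideanSpace ℝ (Fin n)) : Prop where
  contDiffAt : ContDiffAt ℝ 2 f x
  hasGradientAt : HasGradientAt f f' x
  lap_eq : lap f x = ℓ

lemma lap_eq_sum_of_hasFDerivAt_fderiv
    {A : EuclideanSpace ℝ (Fin n) →L[ℝ] EuclideanSpace ℝ (Fin n) →L[ℝ] ℝ}
    (hA : HasFDerivAt (fderiv ℝ f) A x) :
    lap f x = ∑ i, A (EuclideanSpace.single i 1) (EuclideanSpace.single i 1) := by
  simp only [lap, iteratedFDeriv_two_apply, hA.fderiv, Matrix.cons_val_zero, Matrix.cons_val_one]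

lemma sum_inner_single_mul_inner_single (y z : EuclideanSpace ℝ (Fin n)) :
    ∑ i, inner ℝ y (EuclideanSpace.single i 1) * inner ℝ z (EuclideanSpace.single i 1) =
      inner ℝ y z := by
  simpa only [EuclideanSpace.basisFun_apply, real_inner_comm z] using
    (EuclideanSpace.basisFun (Fin n) ℝ).sum_inner_mul_inner y z

namespace HasLaplacianAt

lemma fderiv_single (hf : HasLaplacianAt f f' ℓ x) (i : Fin n) :
    fderiv ℝ f x (EuclideanSpace.single i 1) = inner ℝ f' (EuclideanSpace.single i 1) :=
  hf.hasGradientAt.fderiv_apply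

lemma eventually_differentiableAt (hf : HasLaplacianAt f f' ℓ x) :
    ∀ᶠ y in 𝓝 x, DifferentiableAt ℝ f y :=
  (hf.contDiffAt.eventually (by simp)).mono fun _ hy => hy.differentiableAt two_ne_zero

lemma hasFDerivAt (hf : HasLaplacianAt f f' ℓ x) : HasFDerivAt f (fderiv ℝ f x) x :=
  hf.eventually_differentiableAt.self_of_nhds.hasFDerivAt

lemma hasFDerivAt_fderiv (hf : HasLaplacianAt f f' ℓ x) :
    HasFDerivAt (fderiv ℝ f) (fderiv ℝ (fderiv ℝ f) x) x :=
  ((hf.contDiffAt.fderiv_right (m := 1) (by norm_num)).differentiableAt one_ne_zero).hasFDerivAt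

lemma sum_fderiv_fderiv (hf : HasLaplacianAt f f' ℓ x) :
    ∑ i, fderiv ℝ (fderiv ℝ f) x (EuclideanSpace.single i 1) (EuclideanSpace.single i 1) = ℓ :=
  (lap_eq_sum_of_hasFDerivAt_fderiv hf.hasFDerivAt_fderiv).symm.trans hf.lap_eq

lemma mul (hf : HasLaplacianAt f f' ℓ x) (hh : HasLaplacianAt h h' ℓ' x) :
    HasLaplacianAt (fun y => f y * h y) (f x • h' + h x • f')
      (f x * ℓ' + h x * ℓ + 2 * inner ℝ f' h') x where
  contDiffAt := hf.contDiffAt.mul hh.contDiffAt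
  hasGradientAt := by
    rw [hasGradientAt_iff_hasFDerivAt, map_add, map_smul, map_smul]
    exact hf.hasGradientAt.hasFDerivAt.mul hh.hasGradientAt.hasFDerivAt
  lap_eq := by
    have hfderiv : fderiv ℝ (fun y => f y * h y) =ᶠ[𝓝 x]
        fun y => f y • fderiv ℝ h y + h y • fderiv ℝ f y := by
      filter_upwards [hf.eventually_differentiableAt, hh.eventually_differentiableAt]
        with y hfy hhy using fderiv_fun_mul hfy hhy
    rw [lap_eq_sum_of_hasFDerivAt_fderiv
      (((hf.hasFDerivAt.smul hh.hasFDerivAt_fderiv).add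
        (hh.hasFDerivAt.smul hf.hasFDerivAt_fderiv)).congr_of_eventuallyEq hfderiv),
      ← hf.sum_fderiv_fderiv, ← hh.sum_fderiv_fderiv, ← sum_inner_single_mul_inner_single f' h']
    simp only [add_apply, smul_apply,
      ContinuousLinearMap.smulRight_apply, smul_eq_mul, hf.fderiv_single, hh.fderiv_single,
      Finset.sum_add_distrib, ← Finset.mul_sum]
    simp only [mul_comm (inner ℝ h' _)]
    ring

lemma comp {φ : ℝ → ℝ} (hφ : ContDiffAt ℝ 2 φ (f x)) (hf : HasLaplacianAt f f' ℓ x) :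
    HasLaplacianAt (fun y => φ (f y)) (deriv φ (f x) • f')
      (deriv φ (f x) * ℓ + deriv (deriv φ) (f x) * ‖f'‖ ^ 2) x where
  contDiffAt := hφ.comp x hf.contDiffAt
  hasGradientAt := by
    rw [hasGradientAt_iff_hasFDerivAt, map_smul]
    exact (hφ.differentiableAt two_ne_zero).hasDerivAt.comp_hasFDerivAt x
      hf.hasGradientAt.hasFDerivAt
  lap_eq := by
    have hφ' : HasDerivAt (deriv φ) (deriv (deriv φ) (f x)) (f x) :=
      (((hφ.fderiv_right (m := 1) (by norm_num)).clm_apply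
        contDiffAt_const).differentiableAt one_ne_zero).hasDerivAt
    have hfderiv : fderiv ℝ (fun y => φ (f y)) =ᶠ[𝓝 x] fun y => deriv φ (f y) • fderiv ℝ f y := by
      filter_upwards [hf.eventually_differentiableAt, hf.contDiffAt.continuousAt.eventually
        (hφ.eventually (by simp))] with y hfy hφy
      exact ((hφy.differentiableAt two_ne_zero).hasDerivAt.comp_hasFDerivAt y
        hfy.hasFDerivAt).fderiv
    rw [lap_eq_sum_of_hasFDerivAt_fderiv (((hφ'.comp_hasFDerivAt x hf.hasFDerivAt).smul
      hf.hasFDerivAt_fderiv).congr_of_eventuallyEq hfderiv),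
      ← hf.sum_fderiv_fderiv, ← real_inner_self_eq_norm_sq,
      ← sum_inner_single_mul_inner_single f' f']
    simp only [add_apply, smul_apply,
      ContinuousLinearMap.smulRight_apply, smul_eq_mul, hf.fderiv_single,
      Finset.sum_add_distrib, ← Finset.mul_sum, mul_assoc, Function.comp_apply]

end HasLaplacianAt

lemma hasLaplacianAt_norm_sq (x : EuclideanSpace ℝ (Fin n)) :
    HasLaplacianAt (fun y => ‖y‖ ^ 2) ((2 : ℝ) • x) (2 * n) x where
  contDiffAt := contDiff_norm_sq ℝ |>.contDiffAt
  hasGradientAt := by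
    rw [hasGradientAt_iff_hasFDerivAt, map_smul]
    exact (hasStrictFDerivAt_norm_sq x).hasFDerivAt.congr_fderiv
      (ofNat_smul_eq_nsmul ℝ 2 (innerSL ℝ x)).symm
  lap_eq := by
    have hfderiv : fderiv ℝ (fun y : EuclideanSpace ℝ (Fin n) => ‖y‖ ^ 2) =
        (2 • innerSL ℝ : EuclideanSpace ℝ (Fin n) →L[ℝ] EuclideanSpace ℝ (Fin n) →L[ℝ] ℝ) := by
      ext1 y
      exact (hasStrictFDerivAt_norm_sq y).hasFDerivAt.fderiv
    rw [lap_eq_sum_of_hasFDerivAt_fderiv (hfderiv ▸ ContinuousLinearMap.hasFDerivAt _)]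
    change ∑ i : Fin n, 2 • inner ℝ (EuclideanSpace.single i (1 : ℝ)) (EuclideanSpace.single i 1) =
      2 * (n : ℝ)
    simp only [real_inner_self_eq_norm_sq, PiLp.norm_single, norm_one, one_pow,
      Finset.sum_const, Finset.card_fin, nsmul_eq_mul, Nat.cast_ofNat]
    ring

lemma x1_apply (hn : 0 < n) (x : EuclideanSpace ℝ (Fin n)) : x1 x = x ⟨0, hn⟩ := dif_pos hn

lemma x1_eq_proj (hn : 0 < n) :
    (x1 : EuclideanSpace ℝ (Fin n) → ℝ) = EuclideanSpace.proj (𝕜 := ℝ) (⟨0, hn⟩ : Fin n) :=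
  funext (x1_apply hn)

lemma hasLaplacianAt_x1 (hn : 0 < n) (x : EuclideanSpace ℝ (Fin n)) :
    HasLaplacianAt x1 (EuclideanSpace.single ⟨0, hn⟩ 1) 0 x where
  contDiffAt := x1_eq_proj hn ▸ (ContinuousLinearMap.contDiff _).contDiffAt
  hasGradientAt := by
    rw [hasGradientAt_iff_hasFDerivAt, x1_eq_proj hn]
    refine (ContinuousLinearMap.hasFDerivAt _).congr_fderiv ?_
    ext y
    simp [EuclideanSpace.inner_single_left]
  lap_eq := by
    have hfderiv : fderiv ℝ (x1 : EuclideanSpace ℝ (Fin n) → ℝ) =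
        fun _ => EuclideanSpace.proj ⟨0, hn⟩ := by
      ext1 y
      rw [x1_eq_proj hn]
      exact ContinuousLinearMap.fderiv _
    rw [lap_eq_sum_of_hasFDerivAt_fderiv (hfderiv ▸ hasFDerivAt_const _ x)]
    simp

lemma hasLaplacianAt_norm_rpow (γ : ℝ) (hx : x ≠ 0) :
    HasLaplacianAt (fun y => ‖y‖ ^ γ) ((γ * ‖x‖ ^ (γ - 2)) • x) (Lam n γ * ‖x‖ ^ (γ - 2)) x := by
  have hx₀ : 0 < ‖x‖ := norm_pos_iff.2 hx
  have hpow : ∀ c : ℝ, (‖x‖ ^ 2) ^ c = ‖x‖ ^ (2 * c) := fun c => by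
    rw [← rpow_natCast, ← rpow_mul hx₀.le, Nat.cast_ofNat]
  have hpow_comp : (fun y : EuclideanSpace ℝ (Fin n) => ‖y‖ ^ γ) =
      fun y => (‖y‖ ^ 2) ^ (γ / 2) := by
    ext y
    rw [← rpow_natCast, ← rpow_mul (norm_nonneg y), Nat.cast_ofNat, mul_div_cancel₀ _ two_ne_zero]
  have hderiv : deriv (fun s : ℝ => s ^ (γ / 2)) = fun s => γ / 2 * s ^ (γ / 2 - 1) :=
    funext fun s => deriv_rpow_const s (γ / 2)
  have hderiv₂ : deriv (fun s : ℝ => γ / 2 * s ^ (γ / 2 - 1)) (‖x‖ ^ 2) =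
      γ / 2 * ((γ / 2 - 1) * (‖x‖ ^ 2) ^ (γ / 2 - 1 - 1)) := by
    rw [deriv_const_mul_field, Real.deriv_rpow_const]
  have hcomp := (hasLaplacianAt_norm_sq x).comp (φ := fun s => s ^ (γ / 2))
    (contDiffAt_rpow_const_of_ne (pow_pos hx₀ 2).ne')
  have hmul : ‖x‖ ^ (γ - 2) = ‖x‖ ^ (2 * (γ / 2 - 1 - 1)) * ‖x‖ ^ 2 := by
    rw [← rpow_natCast, ← rpow_add hx₀, Nat.cast_ofNat]
    ring_nf
  have hexp : 2 * (γ / 2 - 1) = γ - 2 := by ring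
  simp only [hderiv, hderiv₂, hpow, hexp, norm_smul, norm_ofNat, ← hpow_comp, smul_smul] at hcomp
  convert hcomp using 1
  · congr 1
    ring
  · rw [Lam, hmul]
    ring

end Laplacian

section HalfSpace

variable {n : ℕ} {x : EuclideanSpace ℝ (Fin n)} {γ α μ p : ℝ} {v W : ℝ → ℝ}
  {s : Set (EuclideanSpace ℝ (Fin n))} {u : EuclideanSpace ℝ (Fin n) → ℝ}

lemma x1_le_norm (hn : 0 < n) (x : EuclideanSpace ℝ (Fin n)) : x1 x ≤ ‖x‖ := by
  rw [x1_apply hn]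
  exact (le_abs_self _).trans (PiLp.norm_apply_le x _)

lemma norm_pos_of_mem_halfSpace (hn : 0 < n) (hx : x ∈ halfSpace n) : 0 < ‖x‖ :=
  lt_of_lt_of_le hx (x1_le_norm hn x)

lemma x1_div_norm_mem_Ioc (hn : 0 < n) (hx : x ∈ halfSpace n) : x1 x / ‖x‖ ∈ Ioc 0 1 :=
  ⟨div_pos hx (norm_pos_of_mem_halfSpace hn hx),
    div_le_one_of_le₀ (x1_le_norm hn x) (norm_nonneg x)⟩

lemma continuous_x1 (hn : 0 < n) : Continuous (x1 : EuclideanSpace ℝ (Fin n) → ℝ) :=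
  x1_eq_proj hn ▸ ContinuousLinearMap.continuous _

lemma isOpen_halfSpace (hn : 0 < n) : IsOpen (halfSpace n) :=
  isOpen_lt continuous_const (continuous_x1 hn)

lemma x1_lt_norm_of_apply_ne_zero (hn : 0 < n) {i : Fin n} (hi : i ≠ ⟨0, hn⟩) (hx : x i ≠ 0) :
    x1 x < ‖x‖ := by
  refine lt_of_pow_lt_pow_left₀ 2 (norm_nonneg x) ?_
  rw [x1_apply hn, EuclideanSpace.real_norm_sq_eq]
  exact Finset.single_lt_sum (f := fun j => x j ^ 2) hi (Finset.mem_univ _) (Finset.mem_univ i)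
    (sq_pos_of_ne_zero hx) fun _ _ _ => sq_nonneg _

lemma halfSpace_subset_closure_inter_x1_lt_norm (hn : 2 ≤ n) :
    halfSpace n ⊆ closure (halfSpace n ∩ {x | x1 x < ‖x‖}) := by
  have hn₀ : 0 < n := zero_lt_two.trans_le hn
  have hdense : Dense {x : EuclideanSpace ℝ (Fin n) | x ⟨1, hn⟩ ≠ 0} :=
    (dense_compl_singleton (0 : ℝ)).preimage
      ((EuclideanSpace.proj (𝕜 := ℝ) (⟨1, hn⟩ : Fin n)).isOpenMap fun c =>
        ⟨EuclideanSpace.single ⟨1, hn⟩ c, by simp⟩)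
  exact (hdense.open_subset_closure_inter (isOpen_halfSpace hn₀)).trans <| closure_mono <|
    inter_subset_inter_right _ fun _ hx => x1_lt_norm_of_apply_ne_zero hn₀ (by simp) hx

lemma continuousOn_lap (hs : IsOpen s) (hu : ContDiffOn ℝ 2 u s) : ContinuousOn (lap u) s := by
  intro x hx
  have hcont : ContinuousAt (iteratedFDeriv ℝ 2 u) x :=
    ((hu.contDiffAt (hs.mem_nhds hx)).iteratedFDeriv_right (m := 0) (by norm_num)).continuousAt
  exact ContinuousAt.continuousWithinAt <| tendsto_finsetSum _ fun i _ =>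
    (ContinuousMultilinearMap.apply ℝ _ ℝ
      ![EuclideanSpace.single i 1, EuclideanSpace.single i 1]).continuous.continuousAt.comp hcont

lemma hasLaplacianAt_x1_div_norm (hn : 0 < n) (hx : x ≠ 0) :
    HasLaplacianAt (fun y => x1 y / ‖y‖)
      (‖x‖⁻¹ • (EuclideanSpace.single ⟨0, hn⟩ 1 - (x1 x / ‖x‖ ^ 2) • x))
      (-(n - 1) * (x1 x / ‖x‖) / ‖x‖ ^ 2) x := by
  have hx₀ : 0 < ‖x‖ := norm_pos_iff.2 hx
  have hmul := (hasLaplacianAt_x1 hn x).mul (hasLaplacianAt_norm_rpow (-1) hx)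
  have hexp : ‖x‖ ^ (-1 - 2 : ℝ) = ‖x‖⁻¹ / ‖x‖ ^ 2 := by
    rw [rpow_sub hx₀, rpow_neg_one, rpow_two]
  simp only [rpow_neg_one, hexp, inner_smul_right, EuclideanSpace.inner_single_left, map_one,
    one_mul, ← x1_apply hn, ← div_eq_mul_inv] at hmul
  convert hmul using 1
  · module
  · rw [Lam]
    field

lemma inner_gradient_x1_div_norm (hn : 0 < n) (hx : x ≠ 0) :
    inner ℝ x (‖x‖⁻¹ • (EuclideanSpace.single ⟨0, hn⟩ 1 - (x1 x / ‖x‖ ^ 2) • x)) = 0 := by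
  have hx₀ : ‖x‖ ≠ 0 := norm_ne_zero_iff.2 hx
  rw [inner_smul_right, inner_sub_right, inner_smul_right, EuclideanSpace.inner_single_right,
    real_inner_self_eq_norm_sq, ← x1_apply hn, conj_trivial, one_mul,
    div_mul_cancel₀ _ (pow_ne_zero 2 hx₀), sub_self, mul_zero]

lemma norm_sq_gradient_x1_div_norm (hn : 0 < n) (hx : x ≠ 0) :
    ‖‖x‖⁻¹ • (EuclideanSpace.single ⟨0, hn⟩ 1 - (x1 x / ‖x‖ ^ 2) • x)‖ ^ 2 =
      (1 - (x1 x / ‖x‖) ^ 2) / ‖x‖ ^ 2 := by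
  have hx₀ : ‖x‖ ≠ 0 := norm_ne_zero_iff.2 hx
  rw [norm_smul, mul_pow, norm_sub_sq_real, inner_smul_right, EuclideanSpace.inner_single_left,
    ← x1_apply hn, norm_smul, PiLp.norm_single, map_one, norm_one, norm_inv, norm_norm, mul_pow,
    norm_eq_abs, sq_abs]
  field

lemma lap_norm_rpow_mul_comp (hn : 0 < n) (hx : x ≠ 0) (hv : ContDiffAt ℝ 2 v (x1 x / ‖x‖)) :
    lap (fun y => ‖y‖ ^ γ * v (x1 y / ‖y‖)) x = ‖x‖ ^ (γ - 2) *
      ((1 - (x1 x / ‖x‖) ^ 2) * deriv (deriv v) (x1 x / ‖x‖) -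
        (n - 1) * (x1 x / ‖x‖) * deriv v (x1 x / ‖x‖) + Lam n γ * v (x1 x / ‖x‖)) := by
  have hx₀ : 0 < ‖x‖ := norm_pos_iff.2 hx
  have hexp : ‖x‖ ^ γ = ‖x‖ ^ (γ - 2) * ‖x‖ ^ 2 := by
    rw [rpow_sub hx₀, rpow_two, div_mul_cancel₀ _ (pow_pos hx₀ 2).ne']
  rw [((hasLaplacianAt_norm_rpow γ hx).mul ((hasLaplacianAt_x1_div_norm hn hx).comp hv)).lap_eq,
    real_inner_smul_left, real_inner_smul_right, inner_gradient_x1_div_norm hn hx,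
    norm_sq_gradient_x1_div_norm hn hx, hexp]
  field

lemma contDiffOn_norm_rpow_mul_comp (hn : 0 < n) (hW : ContDiffOn ℝ 2 W (Ico 0 1)) :
    ContDiffOn ℝ 2 (fun x : EuclideanSpace ℝ (Fin n) =>
      ‖x‖ ^ γ * ((x1 x / ‖x‖) ^ α * W (1 - (x1 x / ‖x‖) ^ 2))) (halfSpace n) := by
  have hne : ∀ x ∈ halfSpace n, x ≠ 0 := fun x hx =>
    norm_pos_iff.1 (norm_pos_of_mem_halfSpace hn hx)
  have hnorm : ContDiffOn ℝ 2 (fun x : EuclideanSpace ℝ (Fin n) => ‖x‖ ^ γ) (halfSpace n) :=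
    fun x hx => (hasLaplacianAt_norm_rpow γ (hne x hx)).contDiffAt.contDiffWithinAt
  have hcos : ContDiffOn ℝ 2 (fun x : EuclideanSpace ℝ (Fin n) => x1 x / ‖x‖) (halfSpace n) :=
    fun x hx => (hasLaplacianAt_x1_div_norm hn (hne x hx)).contDiffAt.contDiffWithinAt
  refine hnorm.mul ((hcos.rpow_const_of_ne fun x hx => (x1_div_norm_mem_Ioc hn hx).1.ne').mul
    (hW.comp (contDiffOn_const.sub (hcos.pow 2)) fun x hx => ?_))
  obtain ⟨hpos, hle⟩ := x1_div_norm_mem_Ioc hn hx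
  exact ⟨sub_nonneg.2 (pow_le_one₀ hpos.le hle), sub_lt_self 1 (pow_pos hpos 2)⟩

lemma mul_rpow_of_exponent_eq {r V : ℝ} (hr : 0 < r) (hV : 0 ≤ V) (hp : p ≠ 1) :
    (r ^ (-(2 / (p - 1))) * V) ^ p = r ^ (-(2 / (p - 1)) - 2) * V ^ p := by
  have hp₀ : p - 1 ≠ 0 := sub_ne_zero.2 hp
  have hexp : -(2 / (p - 1)) * p = -(2 / (p - 1)) - 2 := by
    field_simp
    ring
  rw [mul_rpow (rpow_nonneg hr.le _) hV, ← rpow_mul hr.le, hexp]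

lemma lap_add_eq_rpow_of_angular_equation_at (hn : 0 < n) (hp : p ≠ 1) (hx : x ∈ halfSpace n)
    (hv : ContDiffAt ℝ 2 v (x1 x / ‖x‖)) (hv₀ : 0 ≤ v (x1 x / ‖x‖))
    (hode : (1 - (x1 x / ‖x‖) ^ 2) * deriv (deriv v) (x1 x / ‖x‖) -
      (n - 1) * (x1 x / ‖x‖) * deriv v (x1 x / ‖x‖) + μ / (x1 x / ‖x‖) ^ 2 * v (x1 x / ‖x‖) +
      Lam n (-(2 / (p - 1))) * v (x1 x / ‖x‖) = v (x1 x / ‖x‖) ^ p) :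
    lap (fun y => ‖y‖ ^ (-(2 / (p - 1))) * v (x1 y / ‖y‖)) x +
      μ / x1 x ^ 2 * (‖x‖ ^ (-(2 / (p - 1))) * v (x1 x / ‖x‖)) =
        (‖x‖ ^ (-(2 / (p - 1))) * v (x1 x / ‖x‖)) ^ p := by
  have hx₀ : 0 < ‖x‖ := norm_pos_of_mem_halfSpace hn hx
  have hx₁ : x1 x ≠ 0 := (show 0 < x1 x from hx).ne'
  have hexp : ‖x‖ ^ (-(2 / (p - 1))) = ‖x‖ ^ (-(2 / (p - 1)) - 2) * ‖x‖ ^ 2 := by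
    rw [rpow_sub hx₀, rpow_two, div_mul_cancel₀ _ (pow_pos hx₀ 2).ne']
  rw [lap_norm_rpow_mul_comp hn (norm_pos_iff.1 hx₀) hv, mul_rpow_of_exponent_eq hx₀ hv₀ hp,
    ← hode, hexp]
  field

lemma lap_add_eq_rpow_of_angular_equation (hn : 2 ≤ n) (hp : p ≠ 1)
    (hu : ContDiffOn ℝ 2 (fun x => ‖x‖ ^ (-(2 / (p - 1))) * v (x1 x / ‖x‖)) (halfSpace n))
    (hv : ContDiffOn ℝ 2 v (Ioo 0 1)) (hv₀ : ∀ t ∈ Ioc (0 : ℝ) 1, 0 < v t)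
    (hode : ∀ t ∈ Ioo (0 : ℝ) 1, (1 - t ^ 2) * deriv (deriv v) t - ((n : ℝ) - 1) * t * deriv v t +
      μ / t ^ 2 * v t + Lam n (-(2 / (p - 1))) * v t = v t ^ p) (hx : x ∈ halfSpace n) :
    lap (fun y => ‖y‖ ^ (-(2 / (p - 1))) * v (x1 y / ‖y‖)) x +
      μ / x1 x ^ 2 * (‖x‖ ^ (-(2 / (p - 1))) * v (x1 x / ‖x‖)) =
        (‖x‖ ^ (-(2 / (p - 1))) * v (x1 x / ‖x‖)) ^ p := by
  have hn₀ : 0 < n := zero_lt_two.trans_le hn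
  have hoff : EqOn (fun x => lap (fun y => ‖y‖ ^ (-(2 / (p - 1))) * v (x1 y / ‖y‖)) x +
      μ / x1 x ^ 2 * (‖x‖ ^ (-(2 / (p - 1))) * v (x1 x / ‖x‖)))
      (fun x => (‖x‖ ^ (-(2 / (p - 1))) * v (x1 x / ‖x‖)) ^ p)
      (halfSpace n ∩ {x | x1 x < ‖x‖}) := by
    rintro y ⟨hy, hy_lt⟩
    have hmem := x1_div_norm_mem_Ioc hn₀ hy
    have hmem' : x1 y / ‖y‖ ∈ Ioo 0 1 :=
      ⟨hmem.1, (div_lt_one (norm_pos_of_mem_halfSpace hn₀ hy)).2 hy_lt⟩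
    exact lap_add_eq_rpow_of_angular_equation_at hn₀ hp hy
      (hv.contDiffAt (isOpen_Ioo.mem_nhds hmem')) (hv₀ _ hmem).le (hode _ hmem')
  refine hoff.of_subset_closure ?_ ?_ inter_subset_left
    (halfSpace_subset_closure_inter_x1_lt_norm hn) hx
  · exact (continuousOn_lap (isOpen_halfSpace hn₀) hu).add
      ((continuousOn_const.div ((continuous_x1 hn₀).pow 2).continuousOn
        fun y hy => (pow_pos (show 0 < x1 y from hy) 2).ne').mul hu.continuousOn)
  · exact hu.continuousOn.rpow_const fun y hy => Or.inl <| (mul_pos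
      (rpow_pos_of_pos (norm_pos_of_mem_halfSpace hn₀ hy) _)
      (hv₀ _ (x1_div_norm_mem_Ioc hn₀ hy))).ne'

end HalfSpace

section AngularProfile

variable {α μ p d ℓ : ℝ} {w : ℝ → ℝ}

lemma aMinus_lt_half (hμ : μ < 1 / 4) : aMinus μ < 1 / 2 :=
  sub_lt_self _ (sqrt_pos.2 (sub_pos.2 hμ))

lemma aMinus_sq_sub_add (hμ : μ < 1 / 4) : aMinus μ ^ 2 - aMinus μ + μ = 0 := by
  rw [aMinus]
  linear_combination sq_sqrt (sub_pos.2 hμ).le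

lemma aMinus_nonneg (hμ : 0 ≤ μ) : 0 ≤ aMinus μ :=
  sub_nonneg.2 (sqrt_le_iff.2 ⟨by norm_num, by linarith⟩)

lemma aMinus_neg (hμ : μ < 0) : aMinus μ < 0 :=
  sub_neg.2 (lt_sqrt_of_sq_lt (by linarith))

lemma neg_two_lt_mul_aMinus (hp : 1 < p) (hKO : μ < 0 → p < 1 - 2 / aMinus μ) :
    -2 < (p - 1) * aMinus μ := by
  rcases lt_or_ge μ 0 with hμ | hμ
  · rw [← lt_div_iff_of_neg (aMinus_neg hμ), neg_div]
    linarith [hKO hμ]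
  · linarith [mul_nonneg (sub_pos.2 hp).le (aMinus_nonneg hμ)]

lemma one_sub_sq_mem_Icc {t : ℝ} (ht : t ∈ Ioc (0 : ℝ) 1) : 1 - t ^ 2 ∈ Icc (0 : ℝ) 1 :=
  ⟨sub_nonneg.2 (pow_le_one₀ ht.1.le ht.2), sub_le_self 1 (sq_nonneg t)⟩

lemma contDiffOn_rpow_mul_comp_one_sub_sq (hw : ContDiffOn ℝ 2 w (Ico 0 1)) :
    ContDiffOn ℝ 2 (fun t => t ^ α * w (1 - t ^ 2)) (Ioo 0 1) :=
  (contDiffOn_id.rpow_const_of_ne fun _ ht => ht.1.ne').mul <|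
    hw.comp (contDiffOn_const.sub (contDiffOn_id.pow 2)) fun _ ht =>
      Ioo_subset_Ico_self (one_sub_sq_mem_Ioo ht)

lemma exists_pos_angular_profile (hd : 1 < d) (hα : α < 1 / 2) (hαμ : α ^ 2 - α + μ = 0)
    (hp : 1 < p) (hpα : -2 < (p - 1) * α) :
    ∃ w : ℝ → ℝ, ContinuousOn w (Icc 0 1) ∧ (∀ r ∈ Icc (0 : ℝ) 1, 0 < w r) ∧
      ContDiffOn ℝ 2 w (Ico 0 1) ∧ ∀ t ∈ Ioo (0 : ℝ) 1,
        (1 - t ^ 2) * deriv (deriv fun t => t ^ α * w (1 - t ^ 2)) t -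
          (d - 1) * t * deriv (fun t => t ^ α * w (1 - t ^ 2)) t +
          μ / t ^ 2 * (t ^ α * w (1 - t ^ 2)) + ℓ * (t ^ α * w (1 - t ^ 2)) =
            (t ^ α * w (1 - t ^ 2)) ^ p := by
  have hθα : (p - 1) * α / 2 ≤ 0 ∨ 0 < α := by
    rcases le_or_gt α 0 with hα₀ | hα₀
    · exact Or.inl (by linarith [mul_nonpos_of_nonneg_of_nonpos (sub_pos.2 hp).le hα₀])
    · exact Or.inr hα₀
  obtain ⟨w, P, hwP, hP₀, hpos⟩ := exists_pos_isFluxSolution_reaction (b := (d - 1) / 2)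
    (κ := ℓ - α * (α + d - 2)) (by linarith) hα (by linarith) hθα hp
  have hreg : ContDiffOn ℝ 2 w (Ico 0 1) := contDiffOn_of_isFluxSolution_reaction 2 (by linarith)
    hwP hP₀ fun r hr => hpos r (Ico_subset_Icc_self hr)
  exact ⟨w, hwP.continuousOn, hpos, hreg, fun t ht => hwP.angular_equation
    (hreg.mono Ioo_subset_Ico_self) hαμ (fun r hr => hpos r (Ioo_subset_Icc_self hr)) ht⟩

end AngularProfile

lemma exists_strict_bounds_of_isCompact {X : Type*} [TopologicalSpace X] {K : Set X} {f : X → ℝ}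
    (hK : IsCompact K) (hne : K.Nonempty) (hf : ContinuousOn f K) (hpos : ∀ x ∈ K, 0 < f x) :
    ∃ c₁ c₂ : ℝ, 0 < c₁ ∧ c₁ < c₂ ∧ ∀ x ∈ K, c₁ < f x ∧ f x < c₂ := by
  obtain ⟨y, hy, hmin⟩ := hK.exists_isMinOn hne hf
  obtain ⟨z, hz, hmax⟩ := hK.exists_isMaxOn hne hf
  have hyz : f y ≤ f z := hmin hz
  have hy₀ := hpos y hy
  refine ⟨f y / 2, f z + 1, by linarith, by linarith, fun x hx => ?_⟩
  exact ⟨(half_lt_self hy₀).trans_le (hmin hx), lt_add_of_le_of_pos (hmax hx) one_pos⟩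

/-- for `1 < p < p_KO` there is a separable solution
`u(x) = |x|^{−2/(p−1)} v(x₁/|x|)` of `−Δu − (μ/x₁²)u + u^p = 0` whose angular
profile satisfies `c₁ t^{α₋} < v(t) < c₂ t^{α₋}` on `(0,1]`. -/
theorem stmt17 (n : ℕ) (hn : 2 ≤ n) (μ p : ℝ) (hμ : μ < 1 / 4) (hp1 : 1 < p)
    (hKO : μ < 0 → p < 1 - 2 / aMinus μ) :
    ∃ c₁ c₂ : ℝ, 0 < c₁ ∧ c₁ < c₂ ∧ ∃ v : ℝ → ℝ,
      (∀ t ∈ Set.Ioc (0 : ℝ) 1, 0 < v t) ∧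
      ContDiffOn ℝ 2 v (Set.Ioo 0 1) ∧
      (∀ t ∈ Set.Ioo (0 : ℝ) 1,
        (1 - t ^ 2) * deriv (deriv v) t - ((n : ℝ) - 1) * t * deriv v t
          + (μ / t ^ 2) * v t + Lam n (-(2 / (p - 1))) * v t = v t ^ p) ∧
      (∀ t ∈ Set.Ioc (0 : ℝ) 1, c₁ * t ^ aMinus μ < v t ∧ v t < c₂ * t ^ aMinus μ) ∧
      (∀ x ∈ halfSpace n, 0 < ‖x‖ ^ (-(2 / (p - 1))) * v (x1 x / ‖x‖)) ∧
      ContDiffOn ℝ 2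
        (fun x : EuclideanSpace ℝ (Fin n) => ‖x‖ ^ (-(2 / (p - 1))) * v (x1 x / ‖x‖))
        (halfSpace n) ∧
      (∀ x ∈ halfSpace n,
        lap (fun x : EuclideanSpace ℝ (Fin n) => ‖x‖ ^ (-(2 / (p - 1))) * v (x1 x / ‖x‖)) x
          + (μ / (x1 x) ^ 2) * (‖x‖ ^ (-(2 / (p - 1))) * v (x1 x / ‖x‖))
          = (‖x‖ ^ (-(2 / (p - 1))) * v (x1 x / ‖x‖)) ^ p) := by
  have hn₀ : 0 < n := zero_lt_two.trans_le hn
  obtain ⟨w, hw, hw_pos, hw_reg, hode⟩ := exists_pos_angular_profile (d := n)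
    (ℓ := Lam n (-(2 / (p - 1)))) (Nat.one_lt_cast.2 hn) (aMinus_lt_half hμ) (aMinus_sq_sub_add hμ)
    hp1 (neg_two_lt_mul_aMinus hp1 hKO)
  obtain ⟨c₁, c₂, hc₁, hc₁₂, hbounds⟩ :=
    exists_strict_bounds_of_isCompact isCompact_Icc (nonempty_Icc.2 zero_le_one) hw hw_pos
  have hv_pos : ∀ t ∈ Ioc (0 : ℝ) 1, 0 < t ^ aMinus μ * w (1 - t ^ 2) := fun t ht =>
    mul_pos (rpow_pos_of_pos ht.1 _) (hw_pos _ (one_sub_sq_mem_Icc ht))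
  have hv_reg := contDiffOn_rpow_mul_comp_one_sub_sq (α := aMinus μ) hw_reg
  have hu_reg := contDiffOn_norm_rpow_mul_comp (γ := -(2 / (p - 1))) (α := aMinus μ) hn₀ hw_reg
  refine ⟨c₁, c₂, hc₁, hc₁₂, fun t => t ^ aMinus μ * w (1 - t ^ 2), hv_pos, hv_reg, hode,
    fun t ht => ?_, fun x hx => ?_, hu_reg, fun x hx =>
      lap_add_eq_rpow_of_angular_equation (v := fun t => t ^ aMinus μ * w (1 - t ^ 2)) hn hp1.ne'
        hu_reg hv_reg hv_pos hode hx⟩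
  · simp only [mul_comm (t ^ aMinus μ), mul_lt_mul_iff_left₀ (rpow_pos_of_pos ht.1 (aMinus μ))]
    exact hbounds _ (one_sub_sq_mem_Icc ht)
  · exact mul_pos (rpow_pos_of_pos (norm_pos_of_mem_halfSpace hn₀ hx) _)
      (hv_pos _ (x1_div_norm_mem_Ioc hn₀ hx))
end
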